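/- arXiv:math/9705223 — 5 statements merged into one kernel-verified Lean document; each statement's English description precedes it below -/
import Mathlib

section
/- Let a and n be positive integers, and write (1 + y + y^2 + ... + y^{a-1})^n = \sum_{k=0}^{n(a-1)} c_k y^k in \mathbb{Q}[y]. Let f \in \mathbb{Q}[y] be a polynomial of degree less than n. Then for every integer i with 0 \le i \le a-1, the polynomial \sum_{0 \le k \le n(a-1),\ k \equiv i \ (mod\ a)} c_k \cdot f(y-k) is independent of i; equivalently, for each such i it equals (1/a) \cdot \sum_{k=0}^{n(a-1)} c_k \cdot f(y-k). -/
open Polynomial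

lemma aux_ring {A : Type*} [CommRing A] [Algebra ℚ A] (a n : ℕ) (ha : 1 ≤ a) (hn : 1 ≤ n)
    (e s : A) (he : e ^ a = 1) :
    (1 - s) ^ n ∣ (e - 1) * (∑ j ∈ Finset.range a, (e * s) ^ j) ^ n := by
  have h1 : (1 - s) ∣ (e - 1) * (∑ j ∈ Finset.range a, (e * s) ^ j) := by
    have h2 : (e * s - 1) * (∑ j ∈ Finset.range a, (e * s) ^ j) = s ^ a - 1 := by
      rw [mul_geom_sum, mul_pow, he, one_mul]
    have h3 : (s - 1) ∣ s ^ a - 1 := sub_one_dvd_pow_sub_one s a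
    obtain ⟨w, hw⟩ := h3
    refine ⟨e * (∑ j ∈ Finset.range a, (e * s) ^ j) - w, ?_⟩
    linear_combination h2 + hw
  have h4 : ∃ q, (e - 1) = (e - 1) ^ 2 * q := by
    have hN : (e - 1) * (∑ j ∈ Finset.range a, e ^ j) = 0 := by
      rw [mul_geom_sum, he, sub_self]
    have hd : (e - 1) ∣ (∑ j ∈ Finset.range a, e ^ j) - (a : A) := by
      have : (∑ j ∈ Finset.range a, e ^ j) - (a : A) = ∑ j ∈ Finset.range a, (e ^ j - 1) := by
        simp
      rw [this]
      exact Finset.dvd_sum fun j _ => sub_one_dvd_pow_sub_one e j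
    obtain ⟨r, hr⟩ := hd
    have hinv : algebraMap ℚ A (1 / (a : ℚ)) * (a : A) = 1 := by
      rw [← map_natCast (algebraMap ℚ A) a, ← map_mul, one_div, inv_mul_cancel₀, map_one]
      exact_mod_cast (by omega : a ≠ 0)
    refine ⟨-(r * algebraMap ℚ A (1 / (a : ℚ))), ?_⟩
    linear_combination (-(e - 1)) * hinv + (algebraMap ℚ A (1 / (a : ℚ))) * hN
      - (algebraMap ℚ A (1 / (a : ℚ))) * (e - 1) * hr
  obtain ⟨q, hq⟩ := h4
  have h5 : ∀ m : ℕ, (e - 1) ^ (m + 1) ∣ (e - 1) ∧ (e - 1) = (e - 1) ^ (m + 1) * q ^ m := by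
    intro m
    induction m with
    | zero => simp
    | succ m ih =>
      have : (e - 1) = (e - 1) ^ (m + 1 + 1) * q ^ (m + 1) := by
        calc (e - 1) = (e - 1) ^ 2 * q := hq
          _ = (e - 1) * (e - 1) * q := by ring
          _ = ((e - 1) ^ (m + 1) * q ^ m) * (e - 1) * q := by rw [← ih.2]
          _ = _ := by ring
      exact ⟨⟨_, this⟩, this⟩
  obtain ⟨m, rfl⟩ : ∃ m, n = m + 1 := ⟨n - 1, by omega⟩
  refine (pow_dvd_pow_of_dvd h1 (m + 1)).trans ?_
  rw [mul_pow]
  exact mul_dvd_mul (h5 m).1 dvd_rfl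

lemma aux_coeff (a n : ℕ) (ha : 1 ≤ a) (hn : 1 ≤ n) (i : ZMod a) :
    (1 - X : ℚ[X]) ^ n ∣
      ∑ k ∈ Finset.range (n * (a - 1) + 1),
        (if (k : ZMod a) = i - 1 then
          C ((((∑ j ∈ Finset.range a, (X : ℚ[X]) ^ j)) ^ n).coeff k) * X ^ k else 0) -
      ∑ k ∈ Finset.range (n * (a - 1) + 1),
        (if (k : ZMod a) = i then
          C ((((∑ j ∈ Finset.range a, (X : ℚ[X]) ^ j)) ^ n).coeff k) * X ^ k else 0) := by
  let e : AddMonoidAlgebra ℚ[X] (ZMod a) := AddMonoidAlgebra.single 1 1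
  let s : AddMonoidAlgebra ℚ[X] (ZMod a) := AddMonoidAlgebra.single 0 X
  have he : e ^ a = 1 := by
    simp [e, AddMonoidAlgebra.single_pow, AddMonoidAlgebra.one_def]
  have hes : ∀ k : ℕ, (e * s) ^ k = AddMonoidAlgebra.single (k : ZMod a) (X ^ k) := by
    intro k
    simp [e, s, AddMonoidAlgebra.single_pow, AddMonoidAlgebra.single_mul_single]
  set Q : ℚ[X] := (∑ j ∈ Finset.range a, (X : ℚ[X]) ^ j) ^ n with hQ
  have hdeg : Q.natDegree < n * (a - 1) + 1 := by
    refine Nat.lt_succ_of_le (natDegree_pow_le.trans (Nat.mul_le_mul_left _ ?_))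
    refine natDegree_sum_le_of_forall_le _ _ fun j hj => ?_
    rw [natDegree_X_pow]
    have := Finset.mem_range.1 hj
    omega
  have hP : (∑ j ∈ Finset.range a, (e * s) ^ j) ^ n =
      ∑ k ∈ Finset.range (n * (a - 1) + 1),
        (AddMonoidAlgebra.single (k : ZMod a) (C (Q.coeff k) * X ^ k) : AddMonoidAlgebra ℚ[X] (ZMod a)) := by
    have h : (∑ j ∈ Finset.range a, (e * s) ^ j) ^ n = aeval (e * s) Q := by
      simp [hQ]
    rw [h, aeval_eq_sum_range' hdeg]
    refine Finset.sum_congr rfl fun k _ => ?_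
    rw [hes, AddMonoidAlgebra.smul_single, smul_eq_C_mul]
  obtain ⟨w, hw⟩ := aux_ring a n ha hn e s he
  have hs : (1 - s) ^ n = AddMonoidAlgebra.single 0 ((1 - X) ^ n) := by
    have : 1 - s = AddMonoidAlgebra.single 0 (1 - X) := by
      simp [s, AddMonoidAlgebra.one_def]
    rw [this, AddMonoidAlgebra.single_pow]; simp
  rw [hs, hP] at hw
  refine ⟨w.coeff i, ?_⟩
  have := congrArg (fun u : AddMonoidAlgebra ℚ[X] (ZMod a) => u.coeff i) hw
  simp only [sub_mul, one_mul, e] at this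
  rw [AddMonoidAlgebra.coeff_sub, Finsupp.sub_apply, AddMonoidAlgebra.coeff_single_mul_apply,
    AddMonoidAlgebra.coeff_single_zero_mul, AddMonoidAlgebra.coeff_sum, Finsupp.finsetSum_apply,
    Finsupp.finsetSum_apply] at this
  simp only [AddMonoidAlgebra.coeff_single, Finsupp.single_apply, one_mul] at this
  rw [neg_add_eq_sub] at this
  exact this

lemma aux_taylor (n : ℕ) : ∀ f : ℚ[X], f.degree < n →
    aeval (taylor (-1 : ℚ) : ℚ[X] →ₗ[ℚ] ℚ[X]) ((1 - X : ℚ[X]) ^ n) f = 0 := by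
  induction n with
  | zero => 
    intro f hf
    have : f = 0 := by simpa using hf
    simp [this]
  | succ n ih =>
    intro f hf
    rw [pow_succ, map_mul, Module.End.mul_apply]
    apply ih
    by_cases h0 : f = 0
    · simp [h0]
    have : (f - taylor (-1) f).degree < f.degree := 
      degree_sub_lt_left (by simp) h0 (by simp)
    simp only [map_sub, map_one, aeval_X, LinearMap.sub_apply, Module.End.one_apply]
    have h2 := natDegree_lt_iff_degree_lt h0 |>.2 hf
    refine this.trans_le ?_
    rw [degree_eq_natDegree h0]
    exact_mod_cast (by omega : f.natDegree ≤ n)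

lemma aux_pow (k : ℕ) (f : ℚ[X]) :
    ((taylor (-1 : ℚ) : ℚ[X] →ₗ[ℚ] ℚ[X]) ^ k) f = f.comp (X - C (k : ℚ)) := by
  have : f.comp (X - C (k : ℚ)) = taylor (-(k : ℚ)) f := by
    simp [taylor_apply, sub_eq_add_neg]
  rw [this]
  induction k with
  | zero => simp
  | succ k ih =>
    rw [pow_succ', Module.End.mul_apply, ih, taylor_taylor]
    · push_cast; congr 2; ring
    · simp [taylor_apply, sub_eq_add_neg]

/-- Lemma 2.2. Writing `(1 + y + ... + y^(a-1))^n = ∑ c_k y^k`, for any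
polynomial `f` of degree less than `n` and any `0 ≤ i ≤ a-1`, the sum
`∑_{k ≡ i (mod a)} c_k f(y-k)` is independent of `i`, i.e. equals
`(1/a) ∑_k c_k f(y-k)`. -/
theorem statement0 (a n : ℕ) (ha : 1 ≤ a) (hn : 1 ≤ n)
    (c : ℕ → ℚ)
    (hc : ∀ k, c k = (((∑ j ∈ Finset.range a, (X : ℚ[X]) ^ j)) ^ n).coeff k)
    (f : ℚ[X]) (hf : f.degree < n)
    (i : ℕ) (hi : i ≤ a - 1) :
    ∑ k ∈ (Finset.range (n * (a - 1) + 1)).filter (fun k => k % a = i),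
        c k • f.comp (X - C (k : ℚ))
      = (1 / (a : ℚ)) •
        ∑ k ∈ Finset.range (n * (a - 1) + 1), c k • f.comp (X - C (k : ℚ)) := by
  have : NeZero a := ⟨by omega⟩
  let G : ZMod a → ℚ[X] := fun i => ∑ k ∈ Finset.range (n * (a - 1) + 1),
    if (k : ZMod a) = i then c k • f.comp (X - C (k : ℚ)) else 0
  have hG : ∀ i : ZMod a, G i = aeval (taylor (-1 : ℚ) : ℚ[X] →ₗ[ℚ] ℚ[X])
      (∑ k ∈ Finset.range (n * (a - 1) + 1),
        (if (k : ZMod a) = i then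
          C ((((∑ j ∈ Finset.range a, (X : ℚ[X]) ^ j)) ^ n).coeff k) * X ^ k else 0)) f := by
    intro i
    rw [map_sum, LinearMap.sum_apply]
    refine Finset.sum_congr rfl fun k _ => ?_
    split_ifs with h
    · rw [← hc, map_mul, aeval_C, map_pow, aeval_X, Module.End.mul_apply, aux_pow,
        Module.algebraMap_end_apply]
    · simp
  have hstep : ∀ i : ZMod a, G (i - 1) = G i := by
    intro i
    obtain ⟨w, hw⟩ := aux_coeff a n ha hn i
    rw [← sub_eq_zero, hG, hG, ← LinearMap.sub_apply, ← map_sub, hw, mul_comm, map_mul,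
      Module.End.mul_apply, aux_taylor n f hf, map_zero]
  have hconst : ∀ m : ℕ, G (m : ZMod a) = G 0 := by
    intro m
    induction m with
    | zero => simp
    | succ m ih =>
      rw [← ih, ← hstep]; simp
  have hconst' : ∀ j : ZMod a, G j = G 0 := fun j => by
    have := hconst j.val
    rwa [ZMod.natCast_zmod_val] at this
  have hsum : ∑ j : ZMod a, G j =
      ∑ k ∈ Finset.range (n * (a - 1) + 1), c k • f.comp (X - C (k : ℚ)) := by
    simp only [G]
    rw [Finset.sum_comm]
    simp
  have hl : ∑ k ∈ (Finset.range (n * (a - 1) + 1)).filter (fun k => k % a = i),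
        c k • f.comp (X - C (k : ℚ)) = G (i : ZMod a) := by
    rw [Finset.sum_filter]
    refine Finset.sum_congr rfl fun k _ => ?_
    have : ((k : ZMod a) = (i : ZMod a)) ↔ k % a = i := by
      rw [ZMod.natCast_eq_natCast_iff', Nat.mod_eq_of_lt (by omega : i < a)]
    simp only [this]
  rw [hl, ← hsum, Finset.sum_congr rfl (fun j _ => (hconst' j).trans (hconst i).symm)]
  have ha' : (a : ℚ) ≠ 0 := by exact_mod_cast (by omega : a ≠ 0)
  rw [Finset.sum_const, Finset.card_univ, ZMod.card, ← Nat.cast_smul_eq_nsmul ℚ, smul_smul,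
    one_div, inv_mul_cancel₀ ha', one_smul]
end

section
/- Let n \ge 2 and a \ge 1 be integers and write (1 + y + y^2 + ... + y^{a-1})^n = \sum_{k=0}^{n(a-1)} c_k y^k. Then for every integer q > an, N_A(n,q,0,a) = q \cdot \sum_{j \ge 0,\ aj \le q-n} j^{n-1} \, c_{q-n-aj}, i.e. N_A(n,q,0,a) equals q times the coefficient of y^{q-n} in the power series (1 + y + ... + y^{a-1})^n \sum_{j=0}^{\infty} j^{n-1} y^{aj}. -/
open Polynomial

/-- `x` avoids the integer interval `[u, v]` in `ZMod q`. -/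
def Avoids {q : ℕ} (x : ZMod q) (u v : ℤ) : Prop :=
  ∀ k : ℤ, u ≤ k → k ≤ v → x ≠ (k : ZMod q)

/-- The number of `n`-tuples over `ZMod q` all of whose pairwise differences
avoid the integer interval `[u, v]`. -/
noncomputable def N_A (n q : ℕ) (u v : ℤ) : ℕ :=
  Set.ncard {x : Fin n → ZMod q |
    ∀ i j : Fin n, i < j → Avoids (x i - x j) u v}


/-- Tuples bounded by `L` whose consecutive gaps are at least `δ`. -/
def chainSet (m : ℕ) (δ : Fin m → ℕ) (L : ℕ) : Finset (Fin (m+1) → ℕ) :=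
  (Fintype.piFinset fun _ : Fin (m+1) => Finset.range L).filter
    (fun g => ∀ k : Fin m, g k.castSucc + δ k ≤ g k.succ)

lemma mem_chainSet {m : ℕ} {δ : Fin m → ℕ} {L : ℕ} {g : Fin (m+1) → ℕ} :
    g ∈ chainSet m δ L ↔ (∀ i, g i < L) ∧ ∀ k : Fin m, g k.castSucc + δ k ≤ g k.succ := by
  simp [chainSet]

lemma chain_le_last {m : ℕ} {δ : Fin m → ℕ} {g : Fin (m+1) → ℕ}
    (h : ∀ k : Fin m, g k.castSucc + δ k ≤ g k.succ) (i : Fin (m+1)) : g i ≤ g (Fin.last m) := by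
  have : Monotone g := Fin.monotone_iff_le_succ.2 fun k => by have := h k; omega
  exact this (Fin.le_last i)

lemma sum_choose_aux (m D L : ℕ) :
    ∑ t ∈ Finset.range L, (t + (m+1) - D).choose (m+1) = (L + (m+1) - D).choose (m+2) := by
  induction L with
  | zero =>
    simp only [Finset.range_zero, Finset.sum_empty]
    exact (Nat.choose_eq_zero_of_lt (by omega)).symm
  | succ L ih =>
    rw [Finset.sum_range_succ, ih]
    by_cases h : D ≤ L + (m+1)
    · rw [show L + 1 + (m+1) - D = (L + (m+1) - D) + 1 by omega, Nat.choose_succ_succ, add_comm]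
    · rw [Nat.choose_eq_zero_of_lt, Nat.choose_eq_zero_of_lt, Nat.choose_eq_zero_of_lt] <;> omega

lemma fiber_card (m : ℕ) (δ : Fin (m+1) → ℕ) (L t : ℕ) (ht : t < L) :
    ((chainSet (m+1) δ L).filter (fun g => g (Fin.last _) = t)).card
      = (chainSet m (fun k => δ k.castSucc) (t + 1 - δ (Fin.last m))).card := by
  refine Finset.card_bij' (fun g _ => (fun i => g i.castSucc))
    (fun g _ => (Fin.snoc g t : Fin (m+2) → ℕ)) ?_ ?_ ?_ ?_
  · intro g hg
    simp only [Finset.mem_filter, mem_chainSet] at hg ⊢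
    obtain ⟨⟨h1, h2⟩, h3⟩ := hg
    have h4 : ∀ k : Fin m, g k.castSucc.castSucc + δ k.castSucc ≤ g k.succ.castSucc := by
      intro k
      have := h2 k.castSucc
      rwa [Fin.succ_castSucc] at this
    refine ⟨fun i => ?_, h4⟩
    have h5 := h2 (Fin.last m)
    rw [Fin.succ_last, h3] at h5
    have h6 := chain_le_last (g := fun i => g i.castSucc) h4 i
    omega
  · intro g hg
    simp only [Finset.mem_filter, mem_chainSet] at hg ⊢
    obtain ⟨h1, h2⟩ := hg
    refine ⟨⟨fun i => ?_, fun k => ?_⟩, by simp⟩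
    · induction i using Fin.lastCases with
      | last => simpa using ht
      | cast i => have := h1 i; simp only [Fin.snoc_castSucc]; omega
    · induction k using Fin.lastCases with
      | last =>
        have := h1 (Fin.last m)
        simp only [Fin.snoc_castSucc, Fin.succ_last, Fin.snoc_last]; omega
      | cast k =>
        rw [Fin.succ_castSucc]
        simpa only [Fin.snoc_castSucc] using h2 k
  · intro g hg
    simp only [Finset.mem_filter] at hg
    funext i
    induction i using Fin.lastCases with
    | last => simp [hg.2]
    | cast i => simp
  · intro g hg
    funext i
    simp

lemma card_chainSet (m : ℕ) : ∀ (δ : Fin m → ℕ) (L : ℕ),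
    (chainSet m δ L).card = (L + m - ∑ k, δ k).choose (m+1) := by
  induction m with
  | zero =>
    intro δ L
    simp [chainSet]
  | succ m ih =>
    intro δ L
    rw [Finset.card_eq_sum_card_fiberwise (f := fun g => g (Fin.last _)) (t := Finset.range L)]
    · rw [← sum_choose_aux]
      refine Finset.sum_congr rfl fun t ht => ?_
      rw [fiber_card _ _ _ _ (Finset.mem_range.1 ht), ih, Fin.sum_univ_castSucc]
      set D := ∑ k : Fin m, δ k.castSucc
      by_cases h : δ (Fin.last m) ≤ t + 1
      · congr 1; omega
      · rw [Nat.choose_eq_zero_of_lt, Nat.choose_eq_zero_of_lt] <;> omega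
    · intro g hg
      have := (mem_chainSet.1 hg).1 (Fin.last _)
      simpa using this

/-- Descent indicator. -/
def dsc {m : ℕ} (σ : Equiv.Perm (Fin (m+1))) (k : Fin m) : ℕ :=
  if σ k.succ < σ k.castSucc then 1 else 0

/-- Number of descents. -/
def des {m : ℕ} (σ : Equiv.Perm (Fin (m+1))) : ℕ := ∑ k, dsc σ k

lemma no_desc_lt {m : ℕ} (σ : Equiv.Perm (Fin (m+1))) (t s : Fin (m+1)) (hts : t < s)
    (h : ∀ k : Fin m, t ≤ k.castSucc → k.succ ≤ s → dsc σ k = 0) : σ t < σ s := by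
  induction s using Fin.induction with
  | zero => exact absurd hts (by simp)
  | succ i ih =>
    have hti : t ≤ i.castSucc := Fin.le_castSucc_iff.2 hts
    have h1 := h i hti le_rfl
    have h2 : σ i.castSucc < σ i.succ := by
      have hne : σ i.castSucc ≠ σ i.succ := fun e => (Fin.castSucc_lt_succ (i := i)).ne (σ.injective e)
      simp only [dsc] at h1
      split_ifs at h1 with h3
      exact lt_of_le_of_ne (not_lt.1 h3) hne
    rcases hti.eq_or_lt with e | hlt
    · rwa [e]
    · exact (ih hlt fun k hk hk' => h k hk (hk'.trans (Fin.castSucc_lt_succ).le)).trans h2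

lemma sort_iff {m : ℕ} (z : Fin (m+1) → ℕ) (σ : Equiv.Perm (Fin (m+1))) :
    σ = Tuple.sort z ↔ ∀ k : Fin m, z (σ k.castSucc) + dsc σ k ≤ z (σ k.succ) := by
  rw [Tuple.eq_sort_iff]
  constructor
  · rintro ⟨h1, h2⟩ k
    have h3 : z (σ k.castSucc) ≤ z (σ k.succ) := h1 (Fin.castSucc_lt_succ (i := k)).le
    simp only [dsc]
    split_ifs with h
    · have : z (σ k.castSucc) ≠ z (σ k.succ) := fun e =>
        absurd (h2 _ _ (Fin.castSucc_lt_succ (i := k)) e) (not_lt.2 h.le)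
      omega
    · exact h3
  · intro h
    have hm : Monotone (z ∘ σ) := Fin.monotone_iff_le_succ.2 fun k => by
      have := h k; simp only [Function.comp]; omega
    refine ⟨hm, fun i j hij e => no_desc_lt σ i j hij fun k hk hk' => ?_⟩
    have h1 : z (σ i) ≤ z (σ k.castSucc) := hm hk
    have h2 : z (σ k.succ) ≤ z (σ j) := hm hk'
    have := h k
    omega

/-- The linearised avoidance condition. -/
def Good (a : ℕ) {m : ℕ} (z : Fin m → ℕ) : Prop :=
  ∀ i j : Fin m, i < j → ¬ (z j ≤ z i ∧ z i ≤ z j + a)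

lemma good_iff (a : ℕ) {m : ℕ} (z : Fin (m+1) → ℕ) (σ : Equiv.Perm (Fin (m+1))) :
    (Good a z ∧ Tuple.sort z = σ) ↔
      ∀ k : Fin m, z (σ k.castSucc) + (1 + a * dsc σ k) ≤ z (σ k.succ) := by
  rw [eq_comm (b := σ), sort_iff]
  constructor
  · rintro ⟨hg, h⟩ k
    have h1 := h k
    simp only [dsc] at h1 ⊢
    have hne : σ k.castSucc ≠ σ k.succ := fun e => (Fin.castSucc_lt_succ (i := k)).ne (σ.injective e)
    split_ifs at h1 ⊢ with hd
    · have := hg _ _ hd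
      omega
    · have := hg _ _ (lt_of_le_of_ne (not_lt.1 hd) hne)
      omega
  · intro h
    have hs : StrictMono (z ∘ σ) := Fin.strictMono_iff_lt_succ.2 fun k => by
      have := h k; simp only [Function.comp]; omega
    refine ⟨?_, fun k => ?_⟩
    · rintro i j hij ⟨h1, h2⟩
      obtain ⟨s, rfl⟩ := σ.surjective i
      obtain ⟨t, rfl⟩ := σ.surjective j
      have hts : t ≤ s := hs.le_iff_le.1 h1
      have hts : t < s := lt_of_le_of_ne hts (by rintro rfl; exact lt_irrefl _ hij)
      refine absurd (no_desc_lt σ t s hts fun k hk hk' => ?_) (not_lt.2 hij.le)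
      have h3 : z (σ t) ≤ z (σ k.castSucc) := hs.monotone hk
      have h4 : z (σ k.succ) ≤ z (σ s) := hs.monotone hk'
      have h5 := h k
      by_contra h6
      have h7 : a * 1 ≤ a * dsc σ k := Nat.mul_le_mul_left a (by omega)
      omega
    · have h1 := h k
      have : dsc σ k ≤ 1 := by simp only [dsc]; split_ifs <;> simp
      omega

open Classical in
lemma card_sort_fiber {m : ℕ} (L : ℕ) (P : (Fin (m+1) → ℕ) → Prop) (δ : Fin m → ℕ)
    (σ : Equiv.Perm (Fin (m+1)))
    (h : ∀ z, P z ↔ ∀ k : Fin m, z (σ k.castSucc) + δ k ≤ z (σ k.succ)) :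
    ((Fintype.piFinset fun _ : Fin (m+1) => Finset.range L).filter P).card
      = (L + m - ∑ k, δ k).choose (m+1) := by
  rw [← card_chainSet]
  refine Finset.card_bij' (fun z _ => z ∘ σ) (fun g _ => g ∘ σ.symm) ?_ ?_ ?_ ?_
  · intro z hz
    simp only [Finset.mem_filter, Fintype.mem_piFinset, Finset.mem_range, h] at hz
    exact mem_chainSet.2 ⟨fun i => hz.1 _, hz.2⟩
  · intro g hg
    rw [mem_chainSet] at hg
    simp only [Finset.mem_filter, Fintype.mem_piFinset, Finset.mem_range, h]
    exact ⟨fun i => hg.1 _, by simpa using hg.2⟩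
  · intro z _; funext i; simp
  · intro z _; funext i; simp

lemma worpitzky (m J : ℕ) :
    J ^ (m+1) = ∑ σ : Equiv.Perm (Fin (m+1)), (J + m - des σ).choose (m+1) := by
  classical
  have h : (Fintype.piFinset fun _ : Fin (m+1) => Finset.range J).card = J ^ (m+1) := by simp
  rw [← h, Finset.card_eq_sum_card_fiberwise (f := fun z => Tuple.sort z) (t := Finset.univ)
    (by intro x _; simp)]
  refine Finset.sum_congr rfl fun σ _ => ?_
  have h2 := card_sort_fiber J (fun z => Tuple.sort z = σ) (dsc σ) σ
    (fun z => by rw [eq_comm, sort_iff])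
  rw [des, ← h2]
  congr!

open Classical in
lemma card_good (a m L : ℕ) :
    ((Fintype.piFinset fun _ : Fin (m+1) => Finset.range L).filter (Good a)).card
      = ∑ σ : Equiv.Perm (Fin (m+1)), (L - a * des σ).choose (m+1) := by
  rw [Finset.card_eq_sum_card_fiberwise (f := fun z => Tuple.sort z) (t := Finset.univ)
    (by intro x _; simp)]
  refine Finset.sum_congr rfl fun σ _ => ?_
  rw [Finset.filter_filter]
  have h2 := card_sort_fiber L _ (fun k => 1 + a * dsc σ k) σ (fun z => good_iff a z σ)
  rw [Finset.sum_add_distrib, ← Finset.mul_sum] at h2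
  simp only [Finset.sum_const, Finset.card_univ, Fintype.card_fin, smul_eq_mul, mul_one] at h2
  rw [show L - a * des σ = L + m - (m + a * ∑ i, dsc σ i) by rw [des]; omega, ← h2]
  congr!

lemma expand_identity (a m : ℕ) (ha : a ≠ 0) :
    ((((∑ j ∈ Finset.range a, (Polynomial.X : Polynomial ℤ) ^ j) ^ (m+1) : Polynomial ℤ)) : PowerSeries ℤ)
      * PowerSeries.expand a ha (PowerSeries.mk fun n => ((m + n).choose m : ℤ))
      = PowerSeries.mk fun n => ((m + n).choose m : ℤ) := by
  set F : PowerSeries ℤ := PowerSeries.mk fun n => ((m + n).choose m : ℤ) with hF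
  have h1 : F * (1 - PowerSeries.X) ^ (m+1) = 1 :=
    PowerSeries.mk_add_choose_mul_one_sub_pow_eq_one ℤ m
  have h2 : PowerSeries.expand a ha F * (1 - PowerSeries.X ^ a) ^ (m+1) = 1 := by
    have := congrArg (PowerSeries.expand a ha) h1
    simpa using this
  have h3 : (1 - PowerSeries.X ^ a : PowerSeries ℤ)
      = (∑ j ∈ Finset.range a, PowerSeries.X ^ j) * (1 - PowerSeries.X) :=
    (geom_sum_mul_neg _ _).symm
  have h4 : (((∑ j ∈ Finset.range a, (Polynomial.X : Polynomial ℤ) ^ j) ^ (m+1) : Polynomial ℤ) : PowerSeries ℤ)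
      = (∑ j ∈ Finset.range a, PowerSeries.X ^ j) ^ (m+1) := by
    rw [Polynomial.coe_pow]
    congr 1
    have := map_sum (Polynomial.coeToPowerSeries.ringHom (R := ℤ)) (fun j => (Polynomial.X : Polynomial ℤ) ^ j) (Finset.range a)
    simp only [map_pow, Polynomial.coeToPowerSeries.ringHom_apply, Polynomial.coe_X] at this
    exact this
  rw [h4]
  rw [h3, mul_pow] at h2
  linear_combination F * h2 - ((∑ j ∈ Finset.range a, PowerSeries.X ^ j) ^ (m+1) * PowerSeries.expand a ha F) * h1

lemma choose_conv (a m N : ℕ) (ha : 1 ≤ a) (R : ℕ) (hR : N < R) :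
    (m + N).choose m = ∑ i ∈ Finset.range R, if a * i ≤ N then
      (m + i).choose m * ((∑ j ∈ Finset.range a, (Polynomial.X : Polynomial ℕ) ^ j) ^ (m+1)).coeff (N - a * i)
      else 0 := by
  have h := congrArg (PowerSeries.coeff N) (expand_identity a m (by omega))
  rw [mul_comm, PowerSeries.coeff_mul, PowerSeries.coeff_mk, Finset.Nat.sum_antidiagonal_eq_sum_range_succ_mk] at h
  simp only [PowerSeries.coeff_expand, Polynomial.coeff_coe, PowerSeries.coeff_mk] at h
  have hp : ∀ k, ((∑ j ∈ Finset.range a, (Polynomial.X : Polynomial ℤ) ^ j) ^ (m+1)).coeff k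
      = ((((∑ j ∈ Finset.range a, (Polynomial.X : Polynomial ℕ) ^ j) ^ (m+1)).coeff k : ℕ) : ℤ) := by
    intro k
    have : ((∑ j ∈ Finset.range a, (Polynomial.X : Polynomial ℤ) ^ j) ^ (m+1))
        = ((∑ j ∈ Finset.range a, (Polynomial.X : Polynomial ℕ) ^ j) ^ (m+1)).map (Nat.castRingHom ℤ) := by
      simp [Polynomial.map_pow, Polynomial.map_sum]
    rw [this, Polynomial.coeff_map]; simp
  simp only [hp] at h
  have h' : (∑ x ∈ Finset.range N.succ, (if a ∣ x then ((m + x / a).choose m) else 0) *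
        (((∑ j ∈ Finset.range a, (Polynomial.X : Polynomial ℕ) ^ j) ^ (m + 1)).coeff (N - x)))
      = (m + N).choose m := by
    exact_mod_cast h
  rw [← h']
  simp only [ite_mul, zero_mul]
  rw [← Finset.sum_filter, ← Finset.sum_filter]
  refine Finset.sum_bij' (fun k _ => k / a) (fun i _ => a * i) ?_ ?_ ?_ ?_ ?_
  · intro k hk
    simp only [Finset.mem_filter, Finset.mem_range] at hk ⊢
    have := Nat.div_le_self k a
    rw [Nat.mul_div_cancel' hk.2]; omega
  · intro k hk
    simp only [Finset.mem_filter, Finset.mem_range] at hk ⊢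
    exact ⟨by omega, Dvd.intro _ rfl⟩
  · intro k hk
    simp only [Finset.mem_filter, Finset.mem_range] at hk ⊢
    exact Nat.mul_div_cancel' hk.2
  · intro k hk
    exact Nat.mul_div_cancel_left _ ha
  · intro k hk
    simp only [Finset.mem_filter, Finset.mem_range] at hk ⊢
    rw [Nat.mul_div_cancel' hk.2]

/-- For a fixed number `d` of descents. -/
lemma per_perm (a m d q : ℕ) (ha : 1 ≤ a) (hq : a * (m+2) < q) :
    (q - 1 - a - a * d).choose (m+1) = ∑ j ∈ Finset.range q,
      if a * j ≤ q - (m+2) then (if j = 0 then 0 else (j + m - d).choose (m+1)) *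
        ((∑ j ∈ Finset.range a, (Polynomial.X : Polynomial ℕ) ^ j) ^ (m+2)).coeff (q - (m+2) - a * j)
      else 0 := by
  set c := fun k => ((∑ j ∈ Finset.range a, (Polynomial.X : Polynomial ℕ) ^ j) ^ (m+2)).coeff k with hc
  have hq2 : m + 2 < q := lt_of_le_of_lt (Nat.le_mul_of_pos_left _ ha) hq
  have had : a * (d+1) = a * d + a := by ring
  by_cases h : a * (d+1) ≤ q - (m+2)
  · have hd : d + 1 ≤ q := by
      have : 1 * (d+1) ≤ a * (d+1) := Nat.mul_le_mul_right _ ha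
      omega
    have e := choose_conv a (m+1) (q - (m+2) - a * (d+1)) ha (q - (d+1)) (by
      have : 1 * (d+1) ≤ a * (d+1) := Nat.mul_le_mul_right _ ha
      omega)
    rw [show q - 1 - a - a * d = m + 1 + (q - (m+2) - a * (d+1)) by omega, e]
    conv_rhs => rw [show q = (d+1) + (q - (d+1)) by omega, Finset.sum_range_add]
    rw [Finset.sum_eq_zero (s := Finset.range (d+1)), zero_add]
    · refine Finset.sum_congr rfl fun i _ => ?_
      rw [show d + 1 + (q - (d+1)) = q by omega]
      have h1 : a * (d + 1 + i) = a * (d+1) + a * i := by ring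
      have h2 : (a * i ≤ q - (m+2) - a * (d+1)) ↔ a * (d+1+i) ≤ q - (m+2) := by omega
      simp only [h2]
      rw [if_neg (by omega : ¬ d + 1 + i = 0)]
      rw [show d + 1 + i + m - d = m + 1 + i by omega,
        show q - (m+2) - a * (d+1+i) = q - (m+2) - a * (d+1) - a * i by omega]
    · intro j hj
      have := Finset.mem_range.1 hj
      split_ifs
      · simp
      · rw [Nat.choose_eq_zero_of_lt (by omega), zero_mul]
      · rfl
  · rw [Nat.choose_eq_zero_of_lt (by omega), Finset.sum_eq_zero]
    intro j hj
    split_ifs with h1 h2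
    · simp
    · have : j < d + 1 := by
        by_contra h3
        exact h ((Nat.mul_le_mul_left a (not_lt.1 h3)).trans h1)
      rw [Nat.choose_eq_zero_of_lt (by omega), zero_mul]
    · rfl

lemma cast_inj_of_lt {q : ℕ} {x : ℤ} (h : (x : ZMod q) = 0) (h1 : -(q:ℤ) < x) (h2 : x < q) : x = 0 := by
  rw [ZMod.intCast_zmod_eq_zero_iff_dvd] at h
  exact Int.eq_zero_of_abs_lt_dvd h (abs_lt.2 ⟨h1, h2⟩)

open Classical in
lemma N_A_eq (m a q : ℕ) (hq : a + 1 ≤ q) :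
    N_A (m+1) q 0 (a : ℤ) = q *
      ((Fintype.piFinset fun _ : Fin m => Finset.range (q - 1 - a)).filter (Good a)).card := by
  have : NeZero q := ⟨by omega⟩
  set S := (Fintype.piFinset fun _ : Fin m => Finset.range (q - 1 - a)).filter (Good a) with hS
  have hmem : ∀ z, z ∈ S ↔ (∀ i, z i < q - 1 - a) ∧ Good a z := by
    intro z; simp [hS]
  let Φ : ZMod q × (Fin m → ℕ) → (Fin (m+1) → ZMod q) := fun p =>
    Fin.snoc (fun i => p.1 + ((p.2 i + (a+1) : ℕ) : ZMod q)) p.1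
  have hinj : Set.InjOn Φ (((Finset.univ : Finset (ZMod q)) ×ˢ S : Finset _) : Set _) := by
    rintro ⟨t, z⟩ h1 ⟨t', z'⟩ h2 e
    simp only [Finset.coe_product, Finset.coe_univ, Set.mem_prod, Set.mem_univ, true_and,
      Finset.mem_coe, hmem] at h1 h2
    obtain ⟨e1, e2⟩ := Fin.snoc_inj.1 e
    simp only at e1 e2
    subst e2
    congr 1
    funext i
    have e3 := add_left_cancel (congrFun e1 i)
    have e4 := congrArg ZMod.val e3
    have := h1.1 i
    have := h2.1 i
    rw [ZMod.val_natCast_of_lt (by omega), ZMod.val_natCast_of_lt (by omega)] at e4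
    omega
  have himg : {x : Fin (m+1) → ZMod q | ∀ i j : Fin (m+1), i < j → Avoids (x i - x j) 0 (a:ℤ)}
      = Φ '' (((Finset.univ : Finset (ZMod q)) ×ˢ S : Finset _) : Set _) := by
    ext x
    simp only [Set.mem_ofPred_eq, Set.mem_image, Finset.coe_product, Finset.coe_univ, Set.mem_prod,
      Set.mem_univ, true_and, Finset.mem_coe, hmem, Prod.exists]
    constructor
    · intro hx
      have hv : ∀ i : Fin m, a < (x i.castSucc - x (Fin.last m)).val := by
        intro i
        by_contra hle
        refine hx i.castSucc (Fin.last m) (Fin.castSucc_lt_last i)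
          ((x i.castSucc - x (Fin.last m)).val : ℤ) (by positivity) (by omega) ?_
        simp
      have hv2 : ∀ i : Fin m, (x i.castSucc - x (Fin.last m)).val < q := fun i => ZMod.val_lt _
      refine ⟨x (Fin.last m), fun i => (x i.castSucc - x (Fin.last m)).val - (a+1), ⟨?_, ?_⟩, ?_⟩
      · intro i
        have := hv i; have := hv2 i
        show (x i.castSucc - x (Fin.last m)).val - (a+1) < q - 1 - a
        omega
      · rintro i j hij ⟨h1, h2⟩
        simp only at h1 h2
        have := hv i; have := hv j
        refine hx i.castSucc j.castSucc (by simpa using hij)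
          (((x i.castSucc - x (Fin.last m)).val : ℤ) - ((x j.castSucc - x (Fin.last m)).val : ℤ))
          (by omega) (by omega) ?_
        push_cast
        simp
      · funext i
        induction i using Fin.lastCases with
        | last => simp [Φ]
        | cast i =>
          have := hv i
          simp only [Φ, Fin.snoc_castSucc]
          rw [Nat.sub_add_cancel (by omega)]
          simp
    · rintro ⟨t, z, ⟨hz, hg⟩, rfl⟩ i j hij k hk0 hka e
      induction i using Fin.lastCases with
      | last => exact absurd hij (not_lt.2 (Fin.le_last j))
      | cast i =>
        have hi := hz i
        induction j using Fin.lastCases with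
        | last =>
          simp only [Φ, Fin.snoc_castSucc, Fin.snoc_last] at e
          have : (((z i : ℤ) + (a+1) - k : ℤ) : ZMod q) = 0 := by
            push_cast; push_cast at e; linear_combination e
          have := cast_inj_of_lt this (by omega) (by omega)
          omega
        | cast j =>
          have hj := hz j
          simp only [Φ, Fin.snoc_castSucc] at e
          have : (((z i : ℤ) - z j - k : ℤ) : ZMod q) = 0 := by
            push_cast; push_cast at e; linear_combination e
          have := cast_inj_of_lt this (by omega) (by omega)
          have := hg i j (by simpa using hij)
          omega
  rw [N_A, himg, hinj.ncard_image, Set.ncard_coe_finset, Finset.card_product]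
  simp [ZMod.card]

/-- Proposition 3.1. For `q > an`,
`N_A(n,q,0,a) = q ⬝ ∑_{j ≥ 0, aj ≤ q-n} j^(n-1) c_(q-n-aj)`, where the `c_k` are the
coefficients of `(1 + y + ... + y^(a-1))^n`. -/
theorem statement1 (n a : ℕ) (hn : 2 ≤ n) (ha : 1 ≤ a)
    (c : ℕ → ℕ)
    (hc : ∀ k, c k = (((∑ j ∈ Finset.range a, (X : Polynomial ℕ) ^ j)) ^ n).coeff k)
    (q : ℕ) (hq : a * n < q) :
    N_A n q 0 (a : ℤ) =
      q * ∑ j ∈ Finset.range q,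
        (if a * j ≤ q - n then j ^ (n - 1) * c (q - n - a * j) else 0) := by
  obtain ⟨m, rfl⟩ : ∃ m, n = m + 2 := ⟨n - 2, by omega⟩
  have haq : a + 1 ≤ q := by
    have : a * 1 ≤ a * (m+2) := Nat.mul_le_mul_left a (by omega)
    omega
  rw [N_A_eq (m+1) a q haq, card_good]
  congr 1
  rw [Finset.sum_congr rfl fun σ _ => per_perm a m (des σ) q ha hq, Finset.sum_comm]
  refine Finset.sum_congr rfl fun j _ => ?_
  by_cases h : a * j ≤ q - (m+2)
  · simp only [if_pos h, ← hc]
    rw [← Finset.sum_mul]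
    congr 1
    rcases Nat.eq_zero_or_pos j with rfl | hj
    · simp
    · simp only [if_neg hj.ne']
      exact (worpitzky m j).symm
  · simp only [if_neg h, Finset.sum_const_zero]
end

section
/- Let n \ge 2 and a \ge 1 be integers and write (1 + y + y^2 + ... + y^{a-1})^n = \sum_{k=0}^{n(a-1)} c_k y^k. Then for every integer q > an, a^n \cdot N_A(n,q,0,a) = q \cdot \sum_{k=0}^{n(a-1)} c_k \, (q-n-k)^{n-1} (an identity of rational numbers). -/
open Polynomial

lemma sum_cons_aux (n a : ℕ) (F : ℕ → ℚ) :
    ∑ e : Fin (n+1) → Fin a, F (∑ i, (e i : ℕ)) =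
    ∑ e : Fin n → Fin a, ∑ j ∈ Finset.range a, F ((∑ i, (e i : ℕ)) + j) := by
  rw [← (Fin.consEquiv (fun _ => Fin a)).sum_comp, Fintype.sum_prod_type, Finset.sum_comm]
  refine Finset.sum_congr rfl fun e _ => ?_
  rw [Finset.sum_range]
  refine Finset.sum_congr rfl fun j _ => ?_
  congr 1
  simp [Fin.consEquiv, Fin.sum_univ_succ, add_comm]

lemma degree_shift (p : ℚ[X]) (c : ℚ) (d : ℕ) (hp : p.degree < ((d+1 : ℕ) : WithBot ℕ)) :
    (p.comp (X + C c) - p).degree < (d : WithBot ℕ) := by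
  by_cases h0 : p = 0
  · subst h0; simp
  have hd : (p.comp (X + C c)).degree = p.degree := by
    rw [← taylor_apply, degree_taylor]
  have h1 : (p.comp (X + C c) - p).degree < p.degree := by
    rw [← hd]
    refine degree_sub_lt_left hd ?_ ?_
    · intro h; rw [h] at hd; rw [degree_zero] at hd; exact h0 (degree_eq_bot.1 hd.symm)
    · rw [← taylor_apply]; exact leadingCoeff_taylor ..
  have h2 : p.degree ≤ d := by
    rw [← natDegree_lt_iff_degree_lt h0] at hp
    rw [← natDegree_le_iff_degree_le]; omega
  exact lt_of_lt_of_le h1 h2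

lemma prim_aux (a : ℕ) (ha : 1 ≤ a) (h : ℕ → ℚ) (hper : ∀ t, h (t + a) = h t)
    (hs : ∑ i ∈ Finset.range a, h i = 0) :
    ∃ H : ℕ → ℚ, (∀ t, H (t + 1) - H t = h t) ∧ (∀ t, H (t + a) = H t) ∧
      ∑ i ∈ Finset.range a, H i = 0 := by
  have hS : ∀ t, ∑ i ∈ Finset.range a, h (t + i) = 0 := by
    intro t
    induction t with
    | zero => simpa using hs
    | succ t ih =>
      have e1 := Finset.sum_range_succ (fun i => h (t + i)) a
      have e2 := Finset.sum_range_succ' (fun i => h (t + i)) a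
      have e3 : ∑ i ∈ Finset.range a, h (t + 1 + i) = ∑ i ∈ Finset.range a, h (t + (i + 1)) :=
        Finset.sum_congr rfl fun i _ => by congr 1; ring
      rw [e3]
      simp only [add_zero] at e2
      have := hper t
      linarith
  have ha' : (a : ℚ) ≠ 0 := by positivity
  refine ⟨fun t => ∑ i ∈ Finset.range t, h i -
    (∑ j ∈ Finset.range a, ∑ i ∈ Finset.range j, h i) / a, ?_, ?_, ?_⟩
  · intro t; simp [Finset.sum_range_succ]
  · intro t; simp [Finset.sum_range_add, hS]
  · rw [Finset.sum_sub_distrib]; simp; field_simp; simp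

lemma shift_sum_aux (a : ℕ) (h : ℕ → ℚ) (hper : ∀ t, h (t + a) = h t)
    (hs : ∑ i ∈ Finset.range a, h i = 0) : ∑ i ∈ Finset.range a, h (i + 1) = 0 := by
  have e1 := Finset.sum_range_succ h a
  have e2 := Finset.sum_range_succ' h a
  have := hper 0
  simp only [zero_add] at this
  linarith

lemma key_vanish (a : ℕ) (ha : 1 ≤ a) (d : ℕ) : ∀ n, d ≤ n → ∀ p : ℚ[X],
    p.degree < (d : WithBot ℕ) → ∀ h : ℕ → ℚ, (∀ t, h (t + a) = h t) →
    ∑ i ∈ Finset.range a, h i = 0 →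
    ∑ e : Fin n → Fin a, h (∑ i, (e i : ℕ)) * p.eval ((∑ i, (e i : ℕ) : ℕ) : ℚ) = 0 := by
  induction d with
  | zero =>
    intro n _ p hp h _ _
    have : p = 0 := by
      rw [← degree_eq_bot]
      simpa [Nat.WithBot.lt_zero_iff] using hp
    simp [this]
  | succ d ih =>
    intro n hn p hp h hper hs
    obtain ⟨n, rfl⟩ : ∃ k, n = k + 1 := ⟨n - 1, by omega⟩
    obtain ⟨H, hH, Hper, Hs⟩ := prim_aux a ha h hper hs
    have A1 := ih (n+1) (by omega) _ (degree_shift p 1 d hp) (fun t => H (t + 1))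
      (fun t => by rw [← Hper (t+1)]; congr 1; ring) (shift_sum_aux a H Hper Hs)
    have A2 := ih n (by omega) _ (degree_shift p a d hp) H Hper Hs
    rw [sum_cons_aux n a (fun t => H (t+1) * (p.comp (X + C 1) - p).eval (t : ℚ))] at A1
    rw [sum_cons_aux n a (fun t => h t * p.eval (t : ℚ))]
    rw [← sub_zero (0:ℚ)]
    nth_rewrite 1 [← A2]
    rw [← A1, ← Finset.sum_sub_distrib]
    refine Finset.sum_congr rfl fun e _ => ?_
    generalize (∑ i, (e i : ℕ)) = u
    have T := Finset.sum_range_sub (fun j => H (u + j) * p.eval ((u + j : ℕ) : ℚ)) a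
    rw [eq_sub_iff_add_eq, ← Finset.sum_add_distrib]
    simp only [Hper, add_zero, eval_sub, eval_comp, eval_add, eval_X, eval_C] at T ⊢
    rw [mul_sub, ← Nat.cast_add, ← T]
    refine Finset.sum_congr rfl fun j _ => ?_
    rw [← hH (u + j)]
    push_cast
    simp only [add_assoc]
    ring

lemma coeff_sum_aux (n a : ℕ) (F : ℕ → ℚ) :
    ∑ k ∈ Finset.range (n * (a - 1) + 1),
      ((((∑ j ∈ Finset.range a, (X : Polynomial ℕ) ^ j)) ^ n).coeff k : ℚ) * F k =
    ∑ e : Fin n → Fin a, F (∑ i, (e i : ℕ)) := by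
  have h1 : (∑ j ∈ Finset.range a, (X : Polynomial ℕ) ^ j) ^ n =
      ∑ e : Fin n → Fin a, X ^ (∑ i, (e i : ℕ)) := by
    rw [Finset.sum_range, ← Fin.prod_const, Finset.prod_univ_sum]
    simp [Finset.prod_pow_eq_pow_sum]
  simp only [h1, finsetSum_coeff, coeff_X_pow, Nat.cast_sum, Finset.sum_mul]
  rw [Finset.sum_comm]
  refine Finset.sum_congr rfl fun e _ => ?_
  simp only [Nat.cast_ite, Nat.cast_one, Nat.cast_zero, ite_mul, one_mul, zero_mul]
  rw [Finset.sum_ite_eq', if_pos]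
  have : ∑ i, (e i : ℕ) ≤ ∑ i : Fin n, (a - 1) := Finset.sum_le_sum fun i _ => by omega
  simp at this
  simp; omega

lemma avg_aux (n a : ℕ) (hn : 1 ≤ n) (ha : 1 ≤ a) (M : ℕ) :
    (a : ℚ) * ∑ e : Fin n → Fin a, (if (∑ i, (e i : ℕ)) % a = M % a then
      ((M : ℚ) - (∑ i, (e i : ℕ) : ℕ)) ^ (n - 1) else 0) =
    ∑ e : Fin n → Fin a, ((M : ℚ) - (∑ i, (e i : ℕ) : ℕ)) ^ (n - 1) := by
  have := key_vanish a ha n n le_rfl ((C (M:ℚ) - X) ^ (n-1)) ?_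
    (fun t => (if t % a = M % a then (a:ℚ) else 0) - 1) ?_ ?_
  · rw [Finset.mul_sum, ← sub_eq_zero, ← Finset.sum_sub_distrib]
    refine Eq.trans ?_ this
    refine Finset.sum_congr rfl fun e _ => ?_
    simp only [eval_pow, eval_sub, eval_C, eval_X]
    split_ifs <;> ring
  · refine lt_of_le_of_lt (degree_pow_le _ _) ?_
    have : (C (M:ℚ) - X).degree ≤ 1 := by
      refine (degree_sub_le _ _).trans ?_
      exact max_le (degree_C_le.trans (by simp)) degree_X_le
    refine lt_of_le_of_lt (nsmul_le_nsmul_right this (n-1)) ?_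
    simp only [nsmul_eq_mul, mul_one]
    exact_mod_cast (by omega : n - 1 < n)
  · intro t; simp
  · rw [Finset.sum_sub_distrib]
    have : ∑ i ∈ Finset.range a, (if i % a = M % a then (a:ℚ) else 0) =
      ∑ i ∈ Finset.range a, (if i = M % a then (a:ℚ) else 0) :=
      Finset.sum_congr rfl fun i hi => by rw [Nat.mod_eq_of_lt (Finset.mem_range.1 hi)]
    rw [this, Finset.sum_ite_eq', if_pos (Finset.mem_range.2 (Nat.mod_lt _ ha))]
    simp

/-- Partial sums of a gap vector. -/
def WW {n : ℕ} (g : Fin n → ℕ) (k : ℕ) : ℕ := ∑ l : Fin n, if l.val < k then g l else 0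

/-- The label sequence of a permutation, followed by zeros. -/
def lab {n : ℕ} (σ : Equiv.Perm (Fin n)) (k : ℕ) : ℕ := if h : k < n then (σ ⟨k, h⟩).val else 0

/-- Cyclic orders with gap vectors. -/
def PP (n α β Q : ℕ) : Set (Equiv.Perm (Fin n) × (Fin n → ℕ)) :=
  {P | lab P.1 0 = 0 ∧ ∑ l, P.2 l = Q ∧
    ∀ k : Fin n, (if lab P.1 (k.val + 1) < lab P.1 k.val then β else α) ≤ P.2 k}

/-- Positions of the labels. -/
def Psi {n : ℕ} (P : Equiv.Perm (Fin n) × (Fin n → ℕ)) : Fin n → ℕ :=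
  fun i => WW P.2 (P.1.symm i).val

lemma WW_zero {n : ℕ} (g : Fin n → ℕ) : WW g 0 = 0 := by simp [WW]

lemma WW_succ {n : ℕ} (g : Fin n → ℕ) (k : Fin n) : WW g (k.val + 1) = WW g k.val + g k := by
  have : g k = ∑ l : Fin n, if l = k then g l else 0 := by simp
  rw [WW, WW, this, ← Finset.sum_add_distrib]
  refine Finset.sum_congr rfl fun l _ => ?_
  by_cases h : l = k
  · subst h; simp
  · have : l.val ≠ k.val := fun h' => h (Fin.ext h')
    by_cases h2 : l.val < k.val
    · simp [h, h2, Nat.lt_succ_of_lt h2]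
    · have h3 : ¬ l.val < k.val + 1 := by omega
      simp [h, h2, h3]

lemma WW_full {n : ℕ} (g : Fin n → ℕ) : WW g n = ∑ l, g l := by simp [WW]

lemma WW_mono {n : ℕ} (g : Fin n → ℕ) : Monotone (WW g) := by
  intro i j hij
  refine Finset.sum_le_sum fun l _ => ?_
  split_ifs <;> omega

lemma PP_gap {n α β Q : ℕ} {P : Equiv.Perm (Fin n) × (Fin n → ℕ)} (hP : P ∈ PP n α β Q)
    (i j : ℕ) (hij : i ≤ j) (hj : j ≤ n) :
    lab P.1 i ≤ lab P.1 j ∨ WW P.2 i + β ≤ WW P.2 j := by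
  induction j, hij using Nat.le_induction with
  | base => left; exact le_rfl
  | succ j hij ih =>
    have h1 := hP.2.2 ⟨j, by omega⟩
    have h2 := WW_succ P.2 ⟨j, by omega⟩
    have h3 := WW_mono P.2 hij
    simp only at h1 h2
    have := ih (by omega)
    split_ifs at h1 <;> omega

lemma PP_gap1 {n α β Q : ℕ} (hαβ : α ≤ β) {P : Equiv.Perm (Fin n) × (Fin n → ℕ)}
    (hP : P ∈ PP n α β Q)
    (i j : ℕ) (hij : i < j) (hj : j ≤ n) : WW P.2 i + α ≤ WW P.2 j := by
  have h1 := hP.2.2 ⟨i, by omega⟩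
  have h2 := WW_succ P.2 ⟨i, by omega⟩
  have h3 := WW_mono P.2 (show i + 1 ≤ j by omega)
  simp only at h1 h2
  split_ifs at h1 <;> omega

lemma lab_fin {n : ℕ} (σ : Equiv.Perm (Fin n)) (k : Fin n) : lab σ k.val = (σ k).val := by
  simp [lab]

lemma lab_full {n : ℕ} (σ : Equiv.Perm (Fin n)) : lab σ n = 0 := by
  simp [lab]

lemma Psi_apply {n : ℕ} (P : Equiv.Perm (Fin n) × (Fin n → ℕ)) (k : Fin n) :
    Psi P (P.1 k) = WW P.2 k.val := by simp [Psi]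

lemma PP_sort {n α β Q : ℕ} (hβ : 1 ≤ β) {P : Equiv.Perm (Fin n) × (Fin n → ℕ)}
    (hP : P ∈ PP n α β Q) : P.1 = Tuple.sort (Psi P) := by
  rw [Tuple.eq_sort_iff]
  constructor
  · intro i j hij
    simp only [Function.comp, Psi_apply]
    exact WW_mono _ hij
  · intro i j hij h
    rw [Psi_apply, Psi_apply] at h
    have := PP_gap hP i.val j.val (le_of_lt hij) j.2.le
    rw [lab_fin, lab_fin] at this
    refine lt_of_le_of_ne ?_ (fun h' => hij.ne (P.1.injective h'))
    rw [Fin.le_def]; omega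

lemma Psi_injOn {n α β Q : ℕ} (hβ : 1 ≤ β) : Set.InjOn Psi (PP n α β Q) := by
  intro P hP R hR h
  have h1 : P.1 = R.1 := by rw [PP_sort hβ hP, PP_sort hβ hR, h]
  have h2 : ∀ k, k ≤ n → WW P.2 k = WW R.2 k := by
    intro k hk
    rcases hk.lt_or_eq with hk | rfl
    · have := Psi_apply P ⟨k, hk⟩
      have h' := Psi_apply R ⟨k, hk⟩
      rw [← h, ← h1, this] at h'
      exact h'
    · rw [WW_full, WW_full, hP.2.1, hR.2.1]
  refine Prod.ext h1 (funext fun k => ?_)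
  have a1 := WW_succ P.2 k
  have a2 := WW_succ R.2 k
  have a3 := h2 k.val k.2.le
  have a4 := h2 (k.val + 1) k.2
  omega

/-- Sorted values, followed by `Q`. -/
noncomputable def vv {n : ℕ} (z : Fin n → ℕ) (Q k : ℕ) : ℕ :=
  if h : k < n then z (Tuple.sort z ⟨k, h⟩) else Q

lemma vv_fin {n : ℕ} (z : Fin n → ℕ) (Q : ℕ) (k : Fin n) :
    vv z Q k.val = z (Tuple.sort z k) := by simp [vv]

lemma vv_mono {n : ℕ} (z : Fin n → ℕ) (Q : ℕ) (hz : ∀ i, z i < Q) : Monotone (vv z Q) := by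
  intro i j hij
  unfold vv
  split_ifs with h1 h2
  · exact Tuple.monotone_sort z (show (⟨i, h1⟩ : Fin n) ≤ ⟨j, h2⟩ from hij)
  · exact (hz _).le
  · omega
  · exact le_rfl

/-- Inverse of `Psi`. -/
noncomputable def Phi {n : ℕ} (z : Fin n → ℕ) (Q : ℕ) : Equiv.Perm (Fin n) × (Fin n → ℕ) :=
  (Tuple.sort z, fun k => vv z Q (k.val + 1) - vv z Q k.val)

lemma sort_zero {n : ℕ} (hn : 0 < n) (z : Fin n → ℕ) (h0 : z ⟨0, hn⟩ = 0) :
    Tuple.sort z ⟨0, hn⟩ = ⟨0, hn⟩ := by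
  obtain ⟨h1, h2⟩ := (Tuple.eq_sort_iff (f := z) (σ := Tuple.sort z)).1 rfl
  by_contra hne
  set j := (Tuple.sort z).symm ⟨0, hn⟩ with hj
  have hj' : Tuple.sort z j = ⟨0, hn⟩ := by simp [hj]
  have hlt : (⟨0, hn⟩ : Fin n) < j := by
    refine lt_of_le_of_ne (Fin.mk_le_of_le_val (Nat.zero_le _)) ?_
    intro h; rw [h] at hne; exact hne (by rw [← h] at hj' ⊢; exact hj')
  have a1 := h1 hlt.le
  simp only [Function.comp, hj', h0] at a1
  have := h2 _ _ hlt (by rw [hj', h0]; omega)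
  rw [hj', Fin.lt_def] at this
  simp at this

lemma WW_Phi {n : ℕ} (hn : 0 < n) (z : Fin n → ℕ) (Q : ℕ) (h0 : z ⟨0, hn⟩ = 0)
    (hz : ∀ i, z i < Q) (k : ℕ) (hk : k ≤ n) : WW (Phi z Q).2 k = vv z Q k := by
  induction k with
  | zero =>
    rw [WW_zero, show vv z Q 0 = z (Tuple.sort z ⟨0, hn⟩) from vv_fin z Q ⟨0, hn⟩,
      sort_zero hn z h0, h0]
  | succ k ih =>
    have h1 := WW_succ (Phi z Q).2 ⟨k, hk⟩
    have h2 := vv_mono z Q hz (Nat.le_succ k)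
    simp only [Nat.succ_eq_add_one] at h1 h2
    rw [h1, ih (by omega)]
    simp only [Phi]
    omega

lemma Psi_Phi {n : ℕ} (hn : 0 < n) (z : Fin n → ℕ) (Q : ℕ) (h0 : z ⟨0, hn⟩ = 0)
    (hz : ∀ i, z i < Q) : Psi (Phi z Q) = z := by
  funext i
  rw [Psi, WW_Phi hn z Q h0 hz _ (Fin.is_le'), vv_fin]
  simp [Phi]

lemma Phi_mem {n : ℕ} (hn : 0 < n) (z : Fin n → ℕ) (α β Q : ℕ) (h0 : z ⟨0, hn⟩ = 0)
    (hz : ∀ i, z i < Q)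
    (hg : ∀ k : Fin n, vv z Q k.val + (if lab (Tuple.sort z) (k.val + 1) < lab (Tuple.sort z) k.val
      then β else α) ≤ vv z Q (k.val + 1)) : Phi z Q ∈ PP n α β Q := by
  refine ⟨?_, ?_, ?_⟩
  · have := lab_fin (Tuple.sort z) ⟨0, hn⟩
    rw [sort_zero hn z h0] at this
    exact this
  · rw [← WW_full, WW_Phi hn z Q h0 hz n le_rfl]
    simp [vv]
  · intro k
    exact Nat.le_sub_of_add_le' (hg k)

lemma Psi_zero {n α β Q : ℕ} (hn : 0 < n) {P : Equiv.Perm (Fin n) × (Fin n → ℕ)}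
    (hP : P ∈ PP n α β Q) : Psi P ⟨0, hn⟩ = 0 := by
  have h1 := hP.1
  have h2 := lab_fin P.1 ⟨0, hn⟩
  simp only at h2
  have h3 : P.1 ⟨0, hn⟩ = ⟨0, hn⟩ := Fin.ext (by rw [← h2, h1])
  have := Psi_apply P ⟨0, hn⟩
  rw [h3] at this
  rw [this, WW_zero]

lemma lab_pos {n : ℕ} (σ : Equiv.Perm (Fin n)) (h0 : lab σ 0 = 0) (k : Fin n) (hk : 0 < k.val) :
    0 < lab σ k.val := by
  by_contra h
  have hn : 0 < n := k.pos
  have h2 := lab_fin σ ⟨0, hn⟩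
  have h3 := lab_fin σ k
  have : σ k = σ ⟨0, hn⟩ := Fin.ext (by rw [← h2, ← h3]; simp only; omega)
  have := congrArg Fin.val (σ.injective this)
  simp at this
  omega

lemma PP_lt {n α β Q : ℕ} (hn : 2 ≤ n) {P : Equiv.Perm (Fin n) × (Fin n → ℕ)}
    (hP : P ∈ PP n α β Q) (i : Fin n) : Psi P i + β ≤ Q := by
  obtain ⟨k, rfl⟩ := P.1.surjective i
  rw [Psi_apply]
  have h0 := hP.2.1
  rw [← WW_full] at h0
  have key : ∀ k : Fin n, 0 < k.val → WW P.2 k.val + β ≤ Q := by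
    intro k hk
    have h1 := PP_gap hP k.val n k.2.le le_rfl
    have h2 := lab_pos P.1 hP.1 k hk
    rw [lab_full] at h1
    omega
  by_cases hk : 0 < k.val
  · exact key k hk
  · have h1 := key ⟨1, hn⟩ (by simp)
    have := WW_mono P.2 (show k.val ≤ 1 by omega)
    simp only at h1
    omega

lemma image_Y {n m : ℕ} (hn : 2 ≤ n) :
    Psi '' (PP n 0 1 m) = {z | z ⟨0, by omega⟩ = 0 ∧ ∀ i, z i < m} := by
  ext z
  constructor
  · rintro ⟨P, hP, rfl⟩
    exact ⟨Psi_zero _ hP, fun i => PP_lt hn hP i⟩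
  · rintro ⟨h0, hz⟩
    refine ⟨Phi z m, Phi_mem _ z 0 1 m h0 hz ?_, Psi_Phi _ z m h0 hz⟩
    intro k
    have hm := vv_mono z m hz (Nat.le_succ k.val)
    simp only [Nat.succ_eq_add_one] at hm
    split_ifs with hd
    · by_contra hlt
      have heq : vv z m (k.val + 1) = vv z m k.val := by omega
      by_cases hk : k.val + 1 < n
      · obtain ⟨h1, h2⟩ := (Tuple.eq_sort_iff (f := z) (σ := Tuple.sort z)).1 rfl
        have e1 := vv_fin z m ⟨k.val + 1, hk⟩
        have e2 := vv_fin z m k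
        have e3 := lab_fin (Tuple.sort z) ⟨k.val + 1, hk⟩
        have e4 := lab_fin (Tuple.sort z) k
        simp only at e1 e3
        have := h2 k ⟨k.val + 1, hk⟩ (by rw [Fin.lt_def]; simp) (by rw [← e1, ← e2, heq])
        rw [Fin.lt_def] at this
        omega
      · have e2 := vv_fin z m k
        have := hz (Tuple.sort z k)
        have : vv z m (k.val + 1) = m := by simp [vv, hk]
        omega
    · exact hm

lemma image_Z {n a q : ℕ} (hn : 2 ≤ n):
    Psi '' (PP n 1 (a + 1) q) = {z | z ⟨0, by omega⟩ = 0 ∧ (∀ i, z i < q) ∧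
      ∀ i j : Fin n, i < j → ¬ (z j ≤ z i ∧ z i ≤ z j + a) ∧ z j + a < z i + q} := by
  ext z
  constructor
  · rintro ⟨P, hP, rfl⟩
    refine ⟨Psi_zero _ hP, fun i => ?_, ?_⟩
    · have := PP_lt hn hP i
      omega
    · intro i j hij
      have hj := PP_lt hn hP j
      refine ⟨?_, by omega⟩
      obtain ⟨k, rfl⟩ := P.1.surjective i
      obtain ⟨l, rfl⟩ := P.1.surjective j
      simp only [Psi_apply]
      rw [Fin.lt_def] at hij
      rcases lt_trichotomy k.val l.val with h | h | h
      · have := PP_gap1 (by omega) hP _ _ h l.2.le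
        omega
      · rw [Fin.ext h] at hij; omega
      · have := PP_gap hP _ _ h.le k.2.le
        rw [lab_fin, lab_fin] at this
        omega
  · rintro ⟨h0, hz, hc⟩
    refine ⟨Phi z q, Phi_mem _ z _ _ q h0 hz ?_, Psi_Phi _ z q h0 hz⟩
    intro k
    have hm := vv_mono z q hz (Nat.le_succ k.val)
    simp only [Nat.succ_eq_add_one] at hm
    by_cases hk : k.val + 1 < n
    · have e1 := vv_fin z q ⟨k.val + 1, hk⟩
      have e2 := vv_fin z q k
      have e3 := lab_fin (Tuple.sort z) ⟨k.val + 1, hk⟩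
      have e4 := lab_fin (Tuple.sort z) k
      simp only at e1 e3
      split_ifs with hd
      · have := (hc (Tuple.sort z ⟨k.val + 1, hk⟩) (Tuple.sort z k)
          (by rw [Fin.lt_def]; omega)).1
        omega
      · have hne : Tuple.sort z k ≠ Tuple.sort z ⟨k.val + 1, hk⟩ := by
          intro h
          have := congrArg Fin.val ((Tuple.sort z).injective h)
          simp at this
        have hne' : (Tuple.sort z k).val ≠ (Tuple.sort z ⟨k.val + 1, hk⟩).val :=
          fun h => hne (Fin.ext h)
        have := (hc (Tuple.sort z k) (Tuple.sort z ⟨k.val + 1, hk⟩)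
          (by rw [Fin.lt_def]; omega)).1
        omega
    · have e2 := vv_fin z q k
      have e5 : vv z q (k.val + 1) = q := by simp [vv, hk]
      have hpos := lab_pos (Tuple.sort z) (by
        have := lab_fin (Tuple.sort z) ⟨0, by omega⟩
        rw [sort_zero _ z h0] at this
        exact this) k (by omega)
      rw [lab_fin] at hpos
      have := (hc ⟨0, by omega⟩ (Tuple.sort z k) (by rw [Fin.lt_def]; exact hpos)).2
      rw [h0] at this
      split_ifs <;> omega

lemma card_Y {n m : ℕ} (hn : 2 ≤ n) : (PP n 0 1 m).ncard = m ^ (n - 1) := by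
  rw [← Set.InjOn.ncard_image (Psi_injOn le_rfl), image_Y hn]
  obtain ⟨s, rfl⟩ : ∃ s, n = s + 1 := ⟨n - 1, by omega⟩
  rw [← Nat.card_coe_set_eq]
  have e : ↥{z : Fin (s+1) → ℕ | z ⟨0, by omega⟩ = 0 ∧ ∀ i, z i < m} ≃ (Fin s → Fin m) :=
    { toFun := fun z i => ⟨z.1 i.succ, z.2.2 _⟩
      invFun := fun y => ⟨Fin.cons 0 (fun i => (y i).val), rfl, by
        have : 0 < m := Fin.pos (y ⟨0, by omega⟩)
        intro i
        refine Fin.cases ?_ (fun i => ?_) i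
        · simpa using this
        · simp⟩
      left_inv := by
        rintro ⟨z, h0, hz⟩
        apply Subtype.ext
        funext i
        refine Fin.cases ?_ (fun i => ?_) i
        · exact h0.symm
        · simp
      right_inv := by
        intro y; funext i; simp }
  rw [Nat.card_congr e]
  simp

/-- The divmod correspondence. -/
def Rmap {n : ℕ} (a : ℕ) (T : (Fin n → Fin a) × (Equiv.Perm (Fin n) × (Fin n → ℕ))) :
    Equiv.Perm (Fin n) × (Fin n → ℕ) := (T.2.1, fun k => 1 + (T.2.2 k * a + (T.1 k).val))

lemma Rmap_inj {n a : ℕ} : Function.Injective (Rmap (n := n) a) := by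
  rintro ⟨e, σ, f⟩ ⟨e', σ', f'⟩ h
  simp only [Rmap, Prod.mk.injEq] at h
  obtain ⟨rfl, h⟩ := h
  have hk : ∀ k, f k = f' k ∧ (e k).val = (e' k).val := by
    intro k
    have h1 := congrFun h k
    have h2 : f k * a + (e k).val = f' k * a + (e' k).val := by simpa using h1
    have ha : 0 < a := (e k).pos
    have d1 := congrArg (· / a) h2
    have d2 := congrArg (· % a) h2
    simp only [Nat.mul_add_mod_of_lt (e k).2, Nat.mul_add_mod_of_lt (e' k).2] at d2
    simp only [mul_comm _ a, Nat.mul_add_div ha, Nat.div_eq_of_lt (e k).2,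
      Nat.div_eq_of_lt (e' k).2, add_zero] at d1
    exact ⟨d1, d2⟩
  have e1 : e = e' := funext fun k => Fin.ext (hk k).2
  have e2 : f = f' := funext fun k => (hk k).1
  rw [e1, e2]

lemma image_R {n a q : ℕ} (ha : 1 ≤ a) :
    Rmap a '' {T | ∃ m, T.2 ∈ PP n 0 1 m ∧ n + (m * a + ∑ i, (T.1 i).val) = q} =
      PP n 1 (a + 1) q := by
  ext ⟨σ, g⟩
  constructor
  · rintro ⟨⟨e, σ', f⟩, ⟨m, ⟨h0, hm, hd⟩, hq⟩, h⟩
    simp only [Rmap, Prod.mk.injEq] at h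
    obtain ⟨rfl, rfl⟩ := h
    refine ⟨h0, ?_, ?_⟩
    · simp only [Finset.sum_add_distrib, ← Finset.sum_mul]
      simp only at hm hq
      rw [hm]; simpa using hq
    · intro k
      have := hd k
      simp only at this ⊢
      split_ifs at this ⊢
      · have := Nat.mul_le_mul_right a this
        omega
      · omega
  · rintro ⟨h0, hs, hd⟩
    have hg : ∀ k, 1 ≤ g k := by
      intro k
      have := hd k
      simp only at this
      split_ifs at this <;> omega
    have hdm : ∀ k, 1 + ((g k - 1) / a * a + (g k - 1) % a) = g k := by
      intro k
      rw [Nat.div_add_mod']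
      have := hg k
      omega
    refine ⟨(fun k => ⟨(g k - 1) % a, Nat.mod_lt _ ha⟩, σ, fun k => (g k - 1) / a),
      ⟨_, ⟨h0, rfl, ?_⟩, ?_⟩, ?_⟩
    · intro k
      have := hd k
      simp only at this ⊢
      split_ifs at this ⊢
      · rw [Nat.one_le_div_iff ha]; omega
      · exact Nat.zero_le _
    · simp only at hs ⊢
      rw [← hs, ← Finset.sum_congr rfl (fun k _ => hdm k)]
      simp only [Finset.sum_add_distrib, ← Finset.sum_mul]
      simp
    · simp only [Rmap, hdm]

lemma card_Z {n a q : ℕ} (hn : 2 ≤ n) (ha : 1 ≤ a) (hq : a * n < q) :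
    (PP n 1 (a + 1) q).ncard = ∑ e : Fin n → Fin a,
      if (∑ i, (e i).val) % a = (q - n) % a then ((q - n - ∑ i, (e i).val) / a) ^ (n - 1) else 0 := by
  rw [← image_R ha, Set.ncard_image_of_injective _ Rmap_inj, ← Nat.card_coe_set_eq]
  have e : ↥{T : (Fin n → Fin a) × (Equiv.Perm (Fin n) × (Fin n → ℕ)) |
      ∃ m, T.2 ∈ PP n 0 1 m ∧ n + (m * a + ∑ i, (T.1 i).val) = q} ≃
      Σ e : Fin n → Fin a, ↥{P | ∃ m, P ∈ PP n 0 1 m ∧ n + (m * a + ∑ i, (e i).val) = q} :=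
    { toFun := fun T => ⟨T.1.1, T.1.2, T.2⟩
      invFun := fun S => ⟨(S.1, S.2.1), S.2.2⟩
      left_inv := fun _ => rfl
      right_inv := fun _ => rfl }
  have hfin : ∀ m, (PP n 0 1 m).Finite := by
    intro m
    refine Set.Finite.of_finite_image ?_ (Psi_injOn le_rfl)
    rw [image_Y hn]
    refine Set.Finite.subset (Set.Finite.pi' (fun _ : Fin n => Set.finite_lt_nat m)) ?_
    exact fun z hz i => hz.2 i
  have hset : ∀ e : Fin n → Fin a,
      {P | ∃ m, P ∈ PP n 0 1 m ∧ n + (m * a + ∑ i, (e i).val) = q} =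
      if (∑ i, (e i).val) % a = (q - n) % a then PP n 0 1 ((q - n - ∑ i, (e i).val) / a) else ∅ := by
    intro e
    have hle : ∑ i, (e i : ℕ) ≤ ∑ i : Fin n, (a - 1) := Finset.sum_le_sum fun i _ => by omega
    have hle2 : n + ∑ i, (e i : ℕ) < q := by
      simp only [Finset.sum_const, Finset.card_univ, Fintype.card_fin, smul_eq_mul] at hle
      obtain ⟨b, rfl⟩ : ∃ b, a = b + 1 := ⟨a - 1, by omega⟩
      simp only [Nat.add_sub_cancel] at hle
      nlinarith
    generalize (∑ i, (e i : ℕ)) = S at hle2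
    ext P
    split_ifs with h
    · have hdiv : a ∣ q - n - S := (Nat.modEq_iff_dvd' (by omega)).1 h
      obtain ⟨c, hc⟩ := hdiv
      have hca : q = n + (c * a + S) := by rw [mul_comm c a]; omega
      rw [hc, Nat.mul_div_cancel_left _ ha]
      constructor
      · rintro ⟨m, hP, hm⟩
        have : m * a = c * a := by omega
        rw [← Nat.eq_of_mul_eq_mul_right ha this]
        exact hP
      · intro hP
        exact ⟨c, hP, hca.symm⟩
    · simp only [Set.mem_ofPred_eq, Set.mem_empty_iff_false, iff_false]
      rintro ⟨m, hP, hm⟩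
      apply h
      rw [show q - n = m * a + S by omega]
      simp
  have : ∀ e : Fin n → Fin a,
      Finite ↥{P | ∃ m, P ∈ PP n 0 1 m ∧ n + (m * a + ∑ i, (e i).val) = q} := by
    intro e
    rw [hset e]
    split_ifs
    · exact hfin _
    · infer_instance
  rw [Nat.card_congr e, Nat.card_sigma]
  refine Finset.sum_congr rfl fun e _ => ?_
  rw [Nat.card_coe_set_eq, hset e]
  split_ifs
  · exact card_Y hn
  · simp

lemma avoids_iff {q a : ℕ} (haq : a < q) (x y : ℕ) (hx : x < q) (hy : y < q) :
    Avoids ((x : ZMod q) - (y : ZMod q)) 0 (a : ℤ) ↔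
      ¬ (y ≤ x ∧ x ≤ y + a) ∧ y + a < x + q := by
  have hcast : ∀ k : ℤ, (x : ZMod q) - (y : ZMod q) = (k : ZMod q) ↔ (q : ℤ) ∣ k - (x - y) := by
    intro k
    rw [← ZMod.intCast_eq_intCast_iff_dvd_sub]
    push_cast
    rfl
  constructor
  · intro h
    refine ⟨fun ⟨h1, h2⟩ => ?_, ?_⟩
    · refine h ((x : ℤ) - y) (by omega) (by omega) ?_
      rw [hcast]; simp
    · by_contra h1
      refine h ((x : ℤ) - y + q) (by omega) (by omega) ?_
      rw [hcast]; simp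
  · rintro ⟨h1, h2⟩ k hk0 hka hk
    rw [hcast] at hk
    obtain ⟨c, hc⟩ := hk
    have c1 : c < 2 := by
      by_contra h
      have : (q : ℤ) * 2 ≤ q * c := by gcongr; omega
      omega
    have c2 : -1 < c := by
      by_contra h
      have : (q : ℤ) * c ≤ q * (-1) := by gcongr; omega
      omega
    have : c = 0 ∨ c = 1 := by omega
    rcases this with rfl | rfl <;> omega

lemma N_A_eq_s2 {n a q : ℕ} (hn : 2 ≤ n) (haq : a < q) :
    N_A n q 0 (a : ℤ) = q * (PP n 1 (a + 1) q).ncard := by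
  rw [← Set.InjOn.ncard_image (Psi_injOn (by omega)), image_Z hn, N_A, ← Nat.card_coe_set_eq,
    ← Nat.card_coe_set_eq]
  have : NeZero q := ⟨by omega⟩
  have e : ↥{x : Fin n → ZMod q | ∀ i j : Fin n, i < j → Avoids (x i - x j) 0 (a : ℤ)} ≃
      ZMod q × ↥{z : Fin n → ℕ | z ⟨0, by omega⟩ = 0 ∧ (∀ i, z i < q) ∧
      ∀ i j : Fin n, i < j → ¬ (z j ≤ z i ∧ z i ≤ z j + a) ∧ z j + a < z i + q} :=
    { toFun := fun x => (x.1 ⟨0, by omega⟩,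
        ⟨fun i => (x.1 i - x.1 ⟨0, by omega⟩).val, by simp, fun i => ZMod.val_lt _, by
          intro i j hij
          rw [← avoids_iff haq _ _ (ZMod.val_lt _) (ZMod.val_lt _)]
          simpa using x.2 i j hij⟩)
      invFun := fun p => ⟨fun i => p.1 + (p.2.1 i : ZMod q), by
          intro i j hij
          have := p.2.2.2.2 i j hij
          rw [← avoids_iff haq _ _ (p.2.2.2.1 _) (p.2.2.2.1 _)] at this
          simpa using this⟩
      left_inv := by
        rintro ⟨x, hx⟩
        apply Subtype.ext
        funext i
        simp
      right_inv := by
        rintro ⟨p, z, h0, hz, hc⟩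
        refine Prod.ext ?_ (Subtype.ext (funext fun i => ?_))
        · simp [h0]
        · simp [h0, ZMod.val_natCast, Nat.mod_eq_of_lt (hz i)] }
  rw [Nat.card_congr e, Nat.card_prod, Nat.card_zmod]

/-- Corollary 3.2 (explicit form). For `q > an`,
`a^n ⬝ N_A(n,q,0,a) = q ⬝ ∑_{k=0}^{n(a-1)} c_k (q-n-k)^(n-1)` as rational numbers,
where the `c_k` are the coefficients of `(1 + y + ... + y^(a-1))^n`. -/
theorem statement2 (n a : ℕ) (hn : 2 ≤ n) (ha : 1 ≤ a)
    (c : ℕ → ℕ)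
    (hc : ∀ k, c k = (((∑ j ∈ Finset.range a, (X : Polynomial ℕ) ^ j)) ^ n).coeff k)
    (q : ℕ) (hq : a * n < q) :
    (a : ℚ) ^ n * (N_A n q 0 (a : ℤ) : ℚ) =
      (q : ℚ) * ∑ k ∈ Finset.range (n * (a - 1) + 1),
        (c k : ℚ) * ((q : ℚ) - (n : ℚ) - (k : ℚ)) ^ (n - 1) := by
  have haq : a < q := by nlinarith
  rw [N_A_eq_s2 hn haq, card_Z hn ha hq]
  have e1 := coeff_sum_aux n a (fun k => ((q : ℚ) - (n : ℚ) - (k : ℚ)) ^ (n - 1))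
  simp only [← hc] at e1
  rw [e1]
  have hnq : n ≤ q := by nlinarith
  have e2 := avg_aux n a (by omega) ha (q - n)
  rw [Nat.cast_sub hnq] at e2
  rw [← e2]
  push_cast
  rw [mul_left_comm]
  congr 1
  rw [Finset.mul_sum, Finset.mul_sum]
  refine Finset.sum_congr rfl (fun (e : Fin n → Fin a) _ => ?_)
  split_ifs with h
  · have hle : ∑ i, (e i : ℕ) ≤ ∑ i : Fin n, (a - 1) := Finset.sum_le_sum fun i _ => by omega
    have hle2 : n + ∑ i, (e i : ℕ) < q := by
      simp only [Finset.sum_const, Finset.card_univ, Fintype.card_fin, smul_eq_mul] at hle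
      obtain ⟨b, rfl⟩ : ∃ b, a = b + 1 := ⟨a - 1, by omega⟩
      simp only [Nat.add_sub_cancel] at hle
      nlinarith
    have hdiv : a ∣ q - n - ∑ i, (e i : ℕ) := (Nat.modEq_iff_dvd' (by omega)).1 h
    obtain ⟨m, hm⟩ := hdiv
    have hm' : (q : ℚ) - n - ∑ i, ((e i : ℕ) : ℚ) = a * m := by
      have : q = n + ∑ i, (e i : ℕ) + a * m := by omega
      have := congrArg (Nat.cast : ℕ → ℚ) this
      push_cast at this
      linarith
    rw [hm, hm', Nat.mul_div_cancel_left _ ha]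
    obtain ⟨s, rfl⟩ : ∃ s, n = s + 1 := ⟨n - 1, by omega⟩
    simp only [Nat.add_sub_cancel]
    ring
  · simp
end

section
/- Let n \ge 2 and a \ge 1 be integers. Then for every integer q > an, (q-n) \cdot N_A(n,q,0,a) = q \cdot N_A(n,q-n,1,a-1). (For a = 1 the avoidance condition on the right-hand side is vacuous, so N_A(n,q-n,1,0) = (q-n)^n.) -/
open Polynomial

lemma sub_eq_int_iff {q : ℕ} (s t : ℕ) (k : ℤ) :
    ((s : ZMod q) - (t : ZMod q) = (k : ZMod q)) ↔ (q : ℤ) ∣ (s : ℤ) - t - k := by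
  rw [← ZMod.intCast_zmod_eq_zero_iff_dvd]
  push_cast
  rw [sub_eq_zero]

lemma avoids_general {q : ℕ} (hq : 0 < q) (s t : ℕ) (hs : s < q) (ht : t < q) (u v : ℤ)
    (hu : 0 ≤ u) (hv : v < q) :
    Avoids ((s : ZMod q) - (t : ZMod q)) u v ↔
      (¬ (u ≤ (s : ℤ) - t ∧ (s : ℤ) - t ≤ v)) ∧
      (¬ (u ≤ (s : ℤ) - t + q ∧ (s : ℤ) - t + q ≤ v)) := by
  constructor
  · intro h
    refine ⟨fun h1 => h _ h1.1 h1.2 ?_, fun h1 => h _ h1.1 h1.2 ?_⟩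
    · rw [sub_eq_int_iff]; simp
    · rw [sub_eq_int_iff]
      exact ⟨-1, by ring⟩
  · rintro ⟨h1, h2⟩ k hk1 hk2 he
    rw [sub_eq_int_iff] at he
    obtain ⟨c, hc⟩ := he
    have hc1 : c < 1 := by
      by_contra hcon
      have : (q : ℤ) * 1 ≤ q * c := by
        apply mul_le_mul_of_nonneg_left <;> omega
      omega
    have hc2 : -2 < c := by
      by_contra hcon
      have : (q : ℤ) * c ≤ q * (-2) := by
        apply mul_le_mul_of_nonneg_left <;> omega
      omega
    have : c = 0 ∨ c = -1 := by omega
    rcases this with rfl | rfl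
    · apply h1; constructor <;> omega
    · apply h2; constructor <;> omega

lemma N_A_eq_s3 (m q : ℕ) (hq : 0 < q) (u v : ℤ) :
    N_A (m + 1) q u v = q * Set.ncard {x : Fin (m + 1) → ℕ | x 0 = 0 ∧ (∀ i, x i < q) ∧
      ∀ i j : Fin (m + 1), i < j → Avoids ((x i : ZMod q) - (x j : ZMod q)) u v} := by
  have : NeZero q := ⟨hq.ne'⟩
  set L := {x : Fin (m + 1) → ℕ | x 0 = 0 ∧ (∀ i, x i < q) ∧
      ∀ i j : Fin (m + 1), i < j → Avoids ((x i : ZMod q) - (x j : ZMod q)) u v} with hL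
  have himg : {x : Fin (m + 1) → ZMod q |
      ∀ i j : Fin (m + 1), i < j → Avoids (x i - x j) u v} =
      (fun p : ZMod q × (Fin (m + 1) → ℕ) => fun i => p.1 + (p.2 i : ZMod q)) ''
        ((Set.univ : Set (ZMod q)) ×ˢ L) := by
    ext x
    constructor
    · intro hx
      refine ⟨(x 0, fun i => (x i - x 0).val), ⟨Set.mem_univ _, ?_, ?_, ?_⟩, ?_⟩
      · simp
      · intro i; exact ZMod.val_lt _
      · intro i j hij
        have := hx i j hij
        simpa using this
      · funext i; simp
    · rintro ⟨⟨c, y⟩, ⟨-, h0, h1, h2⟩, rfl⟩ i j hij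
      simpa using h2 i j hij
  have hinj : Set.InjOn (fun p : ZMod q × (Fin (m + 1) → ℕ) => fun i => p.1 + (p.2 i : ZMod q))
        ((Set.univ : Set (ZMod q)) ×ˢ L) := by
    rintro ⟨c, y⟩ ⟨-, h0, h1, h2⟩ ⟨d, z⟩ ⟨-, g0, g1, g2⟩ he
    simp only at h0 h1 h2 g0 g1 g2 he
    have hcd : c = d := by
      have := congrFun he 0
      simpa [h0, g0] using this
    subst hcd
    congr 1
    funext i
    have := congrFun he i
    simp only [add_right_inj] at this
    have := congrArg ZMod.val this
    rwa [ZMod.val_natCast_of_lt (h1 i), ZMod.val_natCast_of_lt (g1 i)] at this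
  unfold N_A
  rw [himg, Set.ncard_image_of_injOn hinj, Set.ncard_prod, Set.ncard_univ, Nat.card_zmod]

/-- linearised left set -/
def LSet (m q a : ℕ) : Set (Fin (m + 1) → ℕ) :=
  {x | x 0 = 0 ∧ (∀ i, x i + a < q) ∧
      ∀ i j : Fin (m + 1), i < j → (x j + a < x i ∨ x i < x j)}

/-- linearised right set -/
def RSet (m p a : ℕ) : Set (Fin (m + 1) → ℕ) :=
  {y | y 0 = 0 ∧ (∀ i, y i + a ≤ p) ∧
      ∀ i j : Fin (m + 1), i < j → (y j + a ≤ y i ∨ y i ≤ y j)}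

lemma LSet_eq (m q a : ℕ) (hq : a < q) :
    {x : Fin (m + 1) → ℕ | x 0 = 0 ∧ (∀ i, x i < q) ∧
      ∀ i j : Fin (m + 1), i < j → Avoids ((x i : ZMod q) - (x j : ZMod q)) 0 (a : ℤ)}
    = LSet m q a := by
  ext x
  constructor
  · rintro ⟨h0, h1, h2⟩
    have h3 : ∀ i j : Fin (m + 1), i < j → _ := fun i j hij =>
      (avoids_general (by omega) _ _ (h1 i) (h1 j) 0 a le_rfl (by omega)).1 (h2 i j hij)
    refine ⟨h0, ?_, ?_⟩
    · intro i
      rcases Fin.eq_zero_or_eq_succ i with rfl | ⟨k, rfl⟩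
      · omega
      · have := h3 0 k.succ (Fin.succ_pos k)
        have := h1 k.succ
        omega
    · intro i j hij
      have := h3 i j hij
      omega
  · rintro ⟨h0, h1, h2⟩
    refine ⟨h0, fun i => by have := h1 i; omega, fun i j hij => ?_⟩
    have hi := h1 i
    have hj := h1 j
    have := h2 i j hij
    rw [avoids_general (by omega) _ _ (by omega) (by omega) 0 a le_rfl (by omega)]
    omega

lemma RSet_eq (m p a : ℕ) (ha : 1 ≤ a) (hq : a ≤ p) :
    {x : Fin (m + 1) → ℕ | x 0 = 0 ∧ (∀ i, x i < p) ∧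
      ∀ i j : Fin (m + 1), i < j → Avoids ((x i : ZMod p) - (x j : ZMod p)) 1 ((a : ℤ) - 1)}
    = RSet m p a := by
  ext x
  constructor
  · rintro ⟨h0, h1, h2⟩
    have h3 : ∀ i j : Fin (m + 1), i < j → _ := fun i j hij =>
      (avoids_general (by omega) _ _ (h1 i) (h1 j) 1 (a - 1) (by omega) (by omega)).1 (h2 i j hij)
    refine ⟨h0, ?_, ?_⟩
    · intro i
      rcases Fin.eq_zero_or_eq_succ i with rfl | ⟨k, rfl⟩
      · omega
      · have := h3 0 k.succ (Fin.succ_pos k)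
        have := h1 k.succ
        omega
    · intro i j hij
      have := h3 i j hij
      omega
  · rintro ⟨h0, h1, h2⟩
    refine ⟨h0, fun i => by have := h1 i; omega, fun i j hij => ?_⟩
    have hi := h1 i
    have hj := h1 j
    have := h2 i j hij
    rw [avoids_general (by omega) _ _ (by omega) (by omega) 1 (a - 1) (by omega) (by omega)]
    omega

/-- rank by position -/
def rk {m : ℕ} (x : Fin (m + 1) → ℕ) (i : Fin (m + 1)) : ℕ :=
  (Finset.univ.filter (fun k => x k < x i)).card

/-- rank in the lexicographic order (value, label) -/
def rkl {m : ℕ} (y : Fin (m + 1) → ℕ) (i : Fin (m + 1)) : ℕ :=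
  (Finset.univ.filter (fun k => y k < y i ∨ (y k = y i ∧ k < i))).card

lemma LSet_inj {m q a : ℕ} {x : Fin (m + 1) → ℕ} (hx : x ∈ LSet m q a) :
    Function.Injective x := by
  intro i j hij
  rcases lt_trichotomy i j with h | h | h
  · have := hx.2.2 i j h; omega
  · exact h
  · have := hx.2.2 j i h; omega

/-- A set of labels whose positions lie in a finset of naturals. -/
lemma card_le_of_inj {m : ℕ} {x : Fin (m + 1) → ℕ} (hx : Function.Injective x)
    (S : Finset (Fin (m + 1))) (T : Finset ℕ) (h : ∀ k ∈ S, x k ∈ T) : S.card ≤ T.card :=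
  Finset.card_le_card_of_injOn x h hx.injOn

lemma rk_split {m : ℕ} (x : Fin (m + 1) → ℕ) (i j : Fin (m + 1)) (h : x j ≤ x i) :
    rk x i = rk x j + (Finset.univ.filter (fun k => x j ≤ x k ∧ x k < x i)).card := by
  unfold rk
  rw [← Finset.card_union_of_disjoint]
  · congr 1
    ext k
    simp only [Finset.mem_union, Finset.mem_filter, Finset.mem_univ, true_and]
    omega
  · rw [Finset.disjoint_left]
    intro k
    simp only [Finset.mem_filter, Finset.mem_univ, true_and]
    omega

lemma rk_le {m : ℕ} {x : Fin (m + 1) → ℕ} (hx : Function.Injective x) (i : Fin (m + 1)) :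
    rk x i ≤ x i := by
  have := card_le_of_inj hx (Finset.univ.filter (fun k => x k < x i)) (Finset.range (x i))
    (by intro k; simp)
  simpa [rk] using this

lemma fwd_mono {m : ℕ} {x : Fin (m + 1) → ℕ} (hx : Function.Injective x) (i j : Fin (m + 1))
    (h : x j ≤ x i) : x j - rk x j ≤ x i - rk x i := by
  have h1 := rk_split x i j h
  have h2 := card_le_of_inj hx (Finset.univ.filter (fun k => x j ≤ x k ∧ x k < x i))
    (Finset.Ico (x j) (x i)) (by intro k; simp)
  simp only [Nat.card_Ico] at h2
  omega

lemma fwd_desc {m q a : ℕ} {x : Fin (m + 1) → ℕ} (hx : x ∈ LSet m q a) (i j : Fin (m + 1))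
    (hij : i < j) (h : x j < x i) : x j - rk x j + a ≤ x i - rk x i := by
  have hinj := LSet_inj hx
  have h1 := rk_split x i j h.le
  set S := Finset.univ.filter (fun k => x j ≤ x k ∧ x k < x i) with hS
  obtain ⟨k, hk, hmax⟩ := Finset.exists_max_image (S.filter (fun k => i < k)) x
    ⟨j, by simp [hS, h, hij]⟩
  simp only [hS, Finset.mem_filter, Finset.mem_univ, true_and] at hk hmax
  have hki := hx.2.2 i k hk.2
  have h2 := card_le_of_inj hinj S (Finset.Icc (x j) (x k) ∪ Finset.Ioo (x k + a) (x i)) (by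
    intro l hl
    simp only [hS, Finset.mem_filter, Finset.mem_univ, true_and] at hl
    simp only [Finset.mem_union, Finset.mem_Icc, Finset.mem_Ioo]
    by_cases hlk : x l ≤ x k
    · left; omega
    · right
      have hli : ¬ i < l := fun hil => hlk (hmax l ⟨hl, hil⟩)
      have hlk' : l < k := lt_of_le_of_lt (not_lt.1 hli) hk.2
      have := hx.2.2 l k hlk'
      omega)
  have h3 := Finset.card_union_le (Finset.Icc (x j) (x k)) (Finset.Ioo (x k + a) (x i))
  simp only [Nat.card_Icc, Nat.card_Ioo] at h3
  have := rk_le hinj i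
  have := rk_le hinj j
  omega

lemma fwd_top {m q a : ℕ} {x : Fin (m + 1) → ℕ} (hx : x ∈ LSet m q a) (i : Fin (m + 1)) :
    x i - rk x i + a ≤ q - (m + 1) := by
  have hinj := LSet_inj hx
  have h1 := Finset.card_filter_add_card_filter_not (s := (Finset.univ : Finset (Fin (m + 1))))
    (fun k => x k < x i)
  have h2 := card_le_of_inj hinj (Finset.univ.filter (fun k => ¬ x k < x i))
    (Finset.Ico (x i) (q - a)) (by
      intro k hk
      have := hx.2.1 k
      simp only [Finset.mem_filter, Finset.mem_univ, true_and] at hk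
      simp only [Finset.mem_Ico]
      omega)
  simp only [Nat.card_Ico, Finset.card_univ, Fintype.card_fin] at h1 h2
  have := rk_le hinj i
  have := hx.2.1 i
  unfold rk at *
  omega

lemma fwd_mem {m q a : ℕ} {x : Fin (m + 1) → ℕ} (hx : x ∈ LSet m q a) :
    (fun i => x i - rk x i) ∈ RSet m (q - (m + 1)) a := by
  refine ⟨by simp [hx.1], fun i => fwd_top hx i, fun i j hij => ?_⟩
  rcases hx.2.2 i j hij with h | h
  · left; exact fwd_desc hx i j hij (by omega)
  · right; exact fwd_mono (LSet_inj hx) j i h.le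

lemma rkl_lt {m : ℕ} (y : Fin (m + 1) → ℕ) (i j : Fin (m + 1))
    (h : y i < y j ∨ (y i = y j ∧ i < j)) : rkl y i < rkl y j := by
  unfold rkl
  apply Finset.card_lt_card
  rw [Finset.ssubset_iff_of_subset]
  · refine ⟨i, by simp [h], by simp⟩
  · intro k
    simp only [Finset.mem_filter, Finset.mem_univ, true_and]
    omega

lemma bwd_lt {m : ℕ} (y : Fin (m + 1) → ℕ) (i j : Fin (m + 1)) :
    (y i + rkl y i < y j + rkl y j) ↔ (y i < y j ∨ (y i = y j ∧ i < j)) := by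
  constructor
  · intro h
    by_contra hc
    by_cases hij : i = j
    · subst hij; omega
    · have := rkl_lt y j i (by omega)
      omega
  · intro h
    have := rkl_lt y i j h
    omega

lemma rkl_le {m : ℕ} (y : Fin (m + 1) → ℕ) (i : Fin (m + 1)) : rkl y i ≤ m := by
  have : rkl y i < (Finset.univ : Finset (Fin (m + 1))).card := by
    unfold rkl
    apply Finset.card_lt_card
    rw [Finset.ssubset_iff_of_subset (Finset.subset_univ _)]
    exact ⟨i, by simp, by simp⟩
  simp at this
  omega

lemma bwd_mem {m q a : ℕ} (ha : 1 ≤ a) (hq : m + 1 ≤ q) {y : Fin (m + 1) → ℕ}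
    (hy : y ∈ RSet m (q - (m + 1)) a) :
    (fun i => y i + rkl y i) ∈ LSet m q a := by
  refine ⟨?_, fun i => ?_, fun i j hij => ?_⟩
  · have h0 := hy.1
    simp [rkl, h0]
  · have := hy.2.1 i
    have := rkl_le y i
    simp only
    omega
  · have := hy.2.2 i j hij
    simp only
    rcases this with h | h
    · left
      have := rkl_lt y j i (by omega)
      omega
    · right
      have := rkl_lt y i j (by omega)
      omega

lemma card_LR (m q a : ℕ) (ha : 1 ≤ a) (hq : m + 1 ≤ q) :
    (LSet m q a).ncard = (RSet m (q - (m + 1)) a).ncard := by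
  have hinv : Set.InvOn (fun (y : Fin (m + 1) → ℕ) i => y i + rkl y i)
      (fun (x : Fin (m + 1) → ℕ) i => x i - rk x i) (LSet m q a) (RSet m (q - (m + 1)) a) := by
    constructor
    · intro x hx
      funext i
      have hinj := LSet_inj hx
      have hle := rk_le hinj i
      have : rkl (fun i => x i - rk x i) i = rk x i := by
        unfold rkl
        rw [rk]
        congr 1
        ext k
        simp only [Finset.mem_filter, Finset.mem_univ, true_and]
        by_cases hki : k = i
        · subst hki; simp
        have hne : x k ≠ x i := fun h => hki (hinj h)
        rcases lt_or_gt_of_ne hne with h | h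
        · have h1 := fwd_mono hinj i k h.le
          have h2 : i < k → _ := fun hik => fwd_desc hx i k hik h
          omega
        · have h1 := fwd_mono hinj k i h.le
          have h2 : k < i → _ := fun hik => fwd_desc hx k i hik h
          omega
      simp only [this]
      omega
    · intro y hy
      funext i
      have : rk (fun i => y i + rkl y i) i = rkl y i := by
        simp only [rk, bwd_lt]
        rfl
      simp only [this]
      omega
  have hb := hinv.bijOn (fun x hx => fwd_mem hx) (fun y hy => bwd_mem ha hq hy)
  rw [← hb.image_eq, Set.ncard_image_of_injOn hb.injOn]

/-- Proposition 3.3. For `q > an`,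
`(q-n) ⬝ N_A(n,q,0,a) = q ⬝ N_A(n,q-n,1,a-1)`. -/
theorem statement3 (n a : ℕ) (hn : 2 ≤ n) (ha : 1 ≤ a)
    (q : ℕ) (hq : a * n < q) :
    (q - n) * N_A n q 0 (a : ℤ) = q * N_A n (q - n) 1 ((a : ℤ) - 1) := by
  obtain ⟨m, rfl⟩ : ∃ m, n = m + 1 := ⟨n - 1, by omega⟩
  have hb : a + (m + 1) ≤ q := by nlinarith
  rw [N_A_eq_s3 m q (by omega), N_A_eq_s3 m (q - (m + 1)) (by omega), LSet_eq m q a (by omega),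
    RSet_eq m _ a ha (by omega), card_LR m q a ha (by omega)]
  ring
end

section
/- Let n \ge 2 and a \ge 1 be integers and write (1 + y + y^2 + ... + y^a)^n = \sum_{k=0}^{na} c_k y^k. Then for every integer q > (a+1)n, (a+1)^n \cdot N_A(n,q,1,a) = q \cdot \sum_{k=0}^{na} c_k \, (q-k)^{n-1} (an identity of rational numbers). -/
open Polynomial

/-- partial sums of weights in the order given by `σ` -/
def pS {N : ℕ} (σ : Equiv.Perm (Fin (N+1))) (w : Fin (N+1) → ℕ) (p : ℕ) : ℕ :=
  ∑ j, if (σ.symm j).val < p then w j else 0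

lemma pS_zero {N : ℕ} (σ : Equiv.Perm (Fin (N+1))) (w : Fin (N+1) → ℕ) : pS σ w 0 = 0 := by
  simp [pS]

lemma pS_succ {N : ℕ} (σ : Equiv.Perm (Fin (N+1))) (w : Fin (N+1) → ℕ) (p : ℕ) (h : p < N+1) :
    pS σ w (p+1) = pS σ w p + w (σ ⟨p, h⟩) := by
  have : w (σ ⟨p, h⟩) = ∑ j, if j = σ ⟨p, h⟩ then w j else 0 := by simp
  rw [this, pS, pS, ← Finset.sum_add_distrib]
  refine Finset.sum_congr rfl fun j _ => ?_
  have hj : j = σ ⟨p, h⟩ ↔ (σ.symm j).val = p := by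
    rw [← Equiv.symm_apply_eq, Fin.ext_iff]
  simp only [hj]
  split_ifs <;> omega

lemma pS_top {N : ℕ} (σ : Equiv.Perm (Fin (N+1))) (w : Fin (N+1) → ℕ) :
    pS σ w (N+1) = ∑ j, w j := by
  refine Finset.sum_congr rfl fun j _ => ?_
  simp [(σ.symm j).2]

lemma pS_mono {N : ℕ} (σ : Equiv.Perm (Fin (N+1))) (w : Fin (N+1) → ℕ) {p p' : ℕ} (h : p ≤ p') :
    pS σ w p ≤ pS σ w p' := by
  refine Finset.sum_le_sum fun j _ => ?_
  split_ifs <;> omega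

lemma pS_divmod {N : ℕ} (σ : Equiv.Perm (Fin (N+1))) (w : Fin (N+1) → ℕ) (b p : ℕ) :
    b * pS σ (fun i => w i / b) p + pS σ (fun i => w i % b) p = pS σ w p := by
  rw [pS, pS, pS, Finset.mul_sum, ← Finset.sum_add_distrib]
  refine Finset.sum_congr rfl fun j _ => ?_
  split_ifs
  · exact Nat.div_add_mod _ _
  · simp

lemma sort_mono {N : ℕ} (x : Fin (N+1) → ℕ) : Monotone (x ∘ Tuple.sort x) :=
  Tuple.monotone_sort x

lemma sort_tie {N : ℕ} (x : Fin (N+1) → ℕ) (i j : Fin (N+1)) (h : i < j)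
    (hx : x (Tuple.sort x i) = x (Tuple.sort x j)) : Tuple.sort x i < Tuple.sort x j :=
  (Tuple.eq_sort_iff.1 rfl).2 i j h hx

lemma sort_zero_s4 {N : ℕ} (x : Fin (N+1) → ℕ) (h : x 0 = 0) : Tuple.sort x 0 = 0 := by
  by_contra hne
  have h1 : (Tuple.sort x).symm 0 ≠ 0 := by
    intro h'; rw [Equiv.symm_apply_eq] at h'; exact hne h'.symm
  have h2 : 0 < (Tuple.sort x).symm 0 := Fin.pos_of_ne_zero h1
  have h3 := sort_mono x h2.le
  simp [h] at h3
  have h4 := sort_tie x _ _ h2 (by simp [h, h3])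
  simp at h4

/-- the avoiding tuples, normalised to `x 0 = 0` -/
def GoodT (N a q : ℕ) (x : Fin (N+1) → ℕ) : Prop :=
  x 0 = 0 ∧ (∀ i, x i < q) ∧
    ∀ i j, i < j → ∀ k, 1 ≤ k → k ≤ a → x i ≠ x j + k ∧ x i + q ≠ x j + k

def GoodP (N a q : ℕ) (z : (Fin (N+1) → ℕ) × (Fin (N+1) → ℕ)) : Prop :=
  (∀ i, z.1 i ≤ a) ∧ z.2 0 = 0 ∧ ∃ m, (a+1) * m + ∑ i, z.1 i = q ∧ ∀ i, z.2 i < m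

def phi (N a : ℕ) (z : (Fin (N+1) → ℕ) × (Fin (N+1) → ℕ)) : Fin (N+1) → ℕ :=
  fun i => (a+1) * z.2 i + pS (Tuple.sort z.2) z.1 ((Tuple.sort z.2).symm i)

lemma sort_phi (N a : ℕ) (z : (Fin (N+1) → ℕ) × (Fin (N+1) → ℕ)) :
    Tuple.sort (phi N a z) = Tuple.sort z.2 := by
  symm
  rw [Tuple.eq_sort_iff]
  constructor
  · intro i j h
    have h1 : z.2 (Tuple.sort z.2 i) ≤ z.2 (Tuple.sort z.2 j) := sort_mono z.2 h
    simp only [Function.comp, phi, Equiv.symm_apply_apply]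
    exact add_le_add (Nat.mul_le_mul_left _ h1) (pS_mono _ _ h)
  · intro i j h he
    have h1 : z.2 (Tuple.sort z.2 i) ≤ z.2 (Tuple.sort z.2 j) := sort_mono z.2 h.le
    have h2 := pS_mono (Tuple.sort z.2) z.1 (p := i) (p' := j) h.le
    simp only [phi, Equiv.symm_apply_apply] at he
    apply sort_tie _ _ _ h
    by_contra hne
    have : z.2 (Tuple.sort z.2 i) + 1 ≤ z.2 (Tuple.sort z.2 j) := by omega
    have := Nat.mul_le_mul_left (a+1) this
    rw [mul_add] at this
    omega

lemma phi_good (N a q : ℕ) (z) (hz : GoodP N a q z) : GoodT N a q (phi N a z) := by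
  obtain ⟨he, h0, m, hm, hf⟩ := hz
  have hle : ∀ i, phi N a z i + (a+1) ≤ q := by
    intro i
    have h1 : (a+1) * (z.2 i + 1) ≤ (a+1) * m := Nat.mul_le_mul_left _ (hf i)
    have h2 := pS_mono (Tuple.sort z.2) z.1 (p := (Tuple.sort z.2).symm i) (p' := N+1) (by omega)
    rw [pS_top] at h2
    unfold phi
    rw [mul_add] at h1
    omega
  refine ⟨?_, fun i => by have := hle i; omega, ?_⟩
  · have : (Tuple.sort z.2).symm 0 = 0 := by
      rw [Equiv.symm_apply_eq, sort_zero_s4 _ h0]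
    simp [phi, h0, this, pS_zero]
  · intro i j hij k hk hka
    refine ⟨fun h => ?_, fun h => ?_⟩
    · -- j before i
      have hs := sort_phi N a z
      set σ := Tuple.sort z.2 with hσ
      have hpos : σ.symm j < σ.symm i := by
        by_contra hc
        have := sort_mono (phi N a z) (not_lt.1 hc)
        simp only [Function.comp, hs, Equiv.apply_symm_apply] at this
        omega
      have hm1 : z.2 (σ (σ.symm j)) ≤ z.2 (σ (σ.symm i)) := sort_mono z.2 hpos.le
      have hm2 := sort_tie z.2 _ _ hpos
      rw [← hσ] at hm2
      simp only [Equiv.apply_symm_apply] at hm1 hm2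
      have hlt : z.2 j + 1 ≤ z.2 i := by
        by_contra hc
        exact absurd (hm2 (by omega)) (not_lt.2 hij.le)
      have h1 := Nat.mul_le_mul_left (a+1) hlt
      have h2 := pS_mono σ z.1 (p := σ.symm j) (p' := σ.symm i) hpos.le
      simp only [phi, ← hσ] at h
      rw [mul_add] at h1
      omega
    · have := hle j
      omega

lemma phi_inj (N a q : ℕ) (z w) (hz : GoodP N a q z) (hw : GoodP N a q w)
    (h : phi N a z = phi N a w) : z = w := by
  have hs : Tuple.sort z.2 = Tuple.sort w.2 := by rw [← sort_phi N a, h, sort_phi]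
  obtain ⟨he, -, m, hm, -⟩ := hz
  obtain ⟨he', -, m', hm', -⟩ := hw
  set σ := Tuple.sort z.2 with hσ
  have key : ∀ p, p ≤ N+1 → pS σ z.1 p ≡ pS σ w.1 p [MOD (a+1)] := by
    intro p hp
    rcases hp.lt_or_eq with hp | rfl
    · have := congrFun h (σ ⟨p, hp⟩)
      simp only [phi, ← hs, ← hσ, Equiv.symm_apply_apply] at this
      have h2 := congrArg (· % (a+1)) this
      simpa [Nat.ModEq, Nat.mul_add_mod] using h2
    · rw [pS_top, pS_top]
      have h2 := congrArg (· % (a+1)) (hm.trans hm'.symm)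
      simpa [Nat.ModEq, Nat.mul_add_mod] using h2
  have he1 : z.1 = w.1 := by
    funext i
    obtain ⟨p, rfl⟩ := σ.surjective i
    have h1 := key (p+1) p.2
    rw [pS_succ _ _ _ p.2, pS_succ _ _ _ p.2] at h1
    have h2 := Nat.ModEq.add_left_cancel (key p (by omega)) h1
    exact Nat.ModEq.eq_of_lt_of_lt h2 (Nat.lt_succ_of_le (he _)) (Nat.lt_succ_of_le (he' _))
  refine Prod.ext he1 ?_
  funext i
  have := congrFun h i
  simp only [phi, ← hs, ← hσ, he1] at this
  exact Nat.eq_of_mul_eq_mul_left (Nat.succ_pos a) (Nat.add_right_cancel this)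

lemma phi_surj (N a q : ℕ) (hq : a < q) (x) (hx : GoodT N a q x) :
    ∃ z, GoodP N a q z ∧ phi N a z = x := by
  obtain ⟨h0, hlt, hav⟩ := hx
  have hs0 := sort_zero_s4 x h0
  have hmono := sort_mono x
  have htie := sort_tie x
  set σ := Tuple.sort x with hσ
  let Y : ℕ → ℕ := fun p => if h : p < N+1 then x (σ ⟨p, h⟩) else q
  have hXlt : ∀ p (h : p < N+1), Y p = x (σ ⟨p, h⟩) := fun p h => dif_pos h
  have hXtop : Y (N+1) = q := by simp [Y]
  have hX0 : Y 0 = 0 := by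
    rw [hXlt 0 (by omega)]
    show x (σ 0) = 0
    rw [hs0, h0]
  have hXs : ∀ p, p < N+1 → Y p ≤ Y (p+1) := by
    intro p hp
    rcases Nat.lt_or_eq_of_le (Nat.succ_le_of_lt hp) with h | h
    · rw [hXlt p hp, hXlt (p+1) h]
      exact hmono (by simp [Fin.le_def])
    · have h' : p + 1 = N + 1 := h
      rw [h', hXtop, hXlt p hp]
      exact (hlt _).le
  let d : Fin (N+1) → ℕ := fun i => Y ((σ.symm i).val + 1) - Y (σ.symm i).val
  have hd : ∀ p (h : p < N+1), d (σ ⟨p, h⟩) = Y (p+1) - Y p := by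
    intro p h; simp [d]
  have htel : ∀ p, p ≤ N+1 → pS σ d p = Y p := by
    intro p
    induction p with
    | zero => intro _; rw [pS_zero, hX0]
    | succ p ih =>
      intro hp
      have := hXs p hp
      rw [pS_succ _ _ _ hp, ih (by omega), hd p hp]
      omega
  let e : Fin (N+1) → ℕ := fun i => d i % (a+1)
  let g : Fin (N+1) → ℕ := fun i => d i / (a+1)
  let f : Fin (N+1) → ℕ := fun i => pS σ g (σ.symm i)
  have hadj : ∀ p (h : p + 1 < N+1), g (σ ⟨p, by omega⟩) = 0 →
      σ ⟨p, by omega⟩ < σ ⟨p+1, h⟩ := by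
    intro p h hg
    have hg' : d (σ ⟨p, by omega⟩) < a+1 := by
      rcases Nat.div_eq_zero_iff.1 hg with h | h
      · omega
      · exact h
    rw [hd p (by omega)] at hg'
    have hle := hXs p (by omega)
    have hl : (⟨p, by omega⟩ : Fin (N+1)) < ⟨p+1, h⟩ := by simp [Fin.lt_def]
    rcases hle.eq_or_lt with h1 | h1
    · apply htie _ _ hl
      rw [← hXlt, ← hXlt, h1]
    · by_contra hc
      have hne : σ ⟨p+1, h⟩ ≠ σ ⟨p, by omega⟩ := fun h' => hl.ne (σ.injective h').symm
      have := (hav _ _ (lt_of_le_of_ne (not_lt.1 hc) hne) (Y (p+1) - Y p) (by omega) (by omega)).1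
      rw [← hXlt, ← hXlt] at this
      omega
  have hpath : ∀ p k (h : p + k + 1 < N+1), pS σ g (p+k+1) = pS σ g p →
      σ ⟨p, by omega⟩ < σ ⟨p+k+1, h⟩ := by
    intro p k
    induction k with
    | zero =>
      intro h hg
      rw [pS_succ _ _ _ (by omega)] at hg
      apply hadj p h
      simpa using hg
    | succ k ih =>
      intro h hg
      have h1 := pS_mono σ g (p := p) (p' := p+k+1) (by omega)
      rw [pS_succ _ _ (p + (k+1)) (by omega)] at hg
      have h2 : pS σ g (p + (k+1)) = pS σ g (p+k+1) := rfl
      exact (ih (by omega) (by omega)).trans (hadj (p+k+1) h (by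
        have : g (σ ⟨p + (k+1), by omega⟩) = 0 := by omega
        exact this))
  have hsf : Tuple.sort f = σ := by
    symm
    rw [Tuple.eq_sort_iff]
    constructor
    · intro i j h
      simp only [Function.comp, f, Equiv.symm_apply_apply]
      exact pS_mono _ _ h
    · intro i j h he
      simp only [f, Equiv.symm_apply_apply] at he
      obtain ⟨i, hi⟩ := i
      obtain ⟨j, hj⟩ := j
      simp only [Fin.mk_lt_mk] at h
      obtain ⟨k, rfl⟩ := Nat.exists_eq_add_of_lt h
      exact hpath i k hj he.symm
  have hdm := fun p => pS_divmod σ d (a+1) p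
  refine ⟨(e, f), ⟨fun i => Nat.lt_succ_iff.1 (Nat.mod_lt _ (Nat.succ_pos a)), ?_, pS σ g (N+1), ?_, ?_⟩, ?_⟩
  · have : σ.symm 0 = 0 := by rw [Equiv.symm_apply_eq, hs0]
    simp [f, this, pS_zero]
  · have := hdm (N+1)
    rw [htel _ le_rfl, hXtop, pS_top σ (fun i => d i % (a+1))] at this
    exact this
  · intro i
    have h1 : f i ≤ pS σ g N := pS_mono _ _ (by omega)
    refine lt_of_le_of_lt h1 ?_
    rw [pS_succ _ _ N (by omega)]
    have : a + 1 ≤ d (σ ⟨N, by omega⟩) := by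
      rw [hd, hXtop, hXlt N (by omega)]
      have hl := hlt (σ ⟨N, by omega⟩)
      by_cases hz : σ ⟨N, by omega⟩ = 0
      · rw [hz, h0]; omega
      · by_contra hc
        have := (hav 0 _ (Fin.pos_of_ne_zero hz) (q - x (σ ⟨N, by omega⟩)) (by omega) (by omega)).2
        omega
    have : 0 < g (σ ⟨N, by omega⟩) := Nat.div_pos this (Nat.succ_pos a)
    omega
  · funext i
    simp only [phi, hsf]
    have h1 := hdm (σ.symm i)
    rw [htel _ (by omega), hXlt _ (σ.symm i).2] at h1
    simpa using h1

/-- equidistribution over residues -/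
lemma resid (b : ℕ) [NeZero b] (n : ℕ) : ∀ (P : ℚ[X]), P.degree < n → ∀ r : ZMod b,
    (b : ℚ) * ∑ e : Fin n → ZMod b, (if ∑ i, e i = r then P.eval ((∑ i, (e i).val : ℕ) : ℚ) else 0)
      = ∑ e : Fin n → ZMod b, P.eval ((∑ i, (e i).val : ℕ) : ℚ) := by
  induction n with
  | zero =>
    intro P hP r
    have : P = 0 := by
      rw [← Polynomial.degree_eq_bot]; exact Nat.WithBot.lt_zero_iff.1 (by simpa using hP)
    simp [this]
  | succ n ih =>
    intro P hP r
    have hdeg : ∀ t : ZMod b, (taylor (t.val : ℚ) P - P).degree < n := by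
      intro t
      by_cases h0 : P = 0
      · simp [h0]
      · have h1 := Polynomial.degree_sub_lt_left (p := taylor (t.val : ℚ) P) (q := P)
          (Polynomial.degree_taylor _ _) (by simpa using h0) (by simp)
        rw [Polynomial.degree_taylor] at h1
        have : P.degree ≤ n := by
          rw [← Polynomial.natDegree_lt_iff_degree_lt h0] at hP
          exact Polynomial.degree_le_of_natDegree_le (by omega)
        exact lt_of_lt_of_le h1 this
    have hsplit : ∀ F : (Fin (n+1) → ZMod b) → ℚ,
        ∑ e, F e = ∑ t : ZMod b, ∑ e' : Fin n → ZMod b, F (Fin.cons t e') := by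
      intro F
      rw [← (Fin.consEquiv (fun _ => ZMod b)).sum_comp, Fintype.sum_prod_type]
      rfl
    rw [hsplit, hsplit]
    simp only [Fin.sum_univ_succ, Fin.cons_zero, Fin.cons_succ]
    have hev : ∀ (t : ZMod b) (s : ℕ), P.eval ((t.val + s : ℕ) : ℚ) =
        (taylor (t.val : ℚ) P - P).eval (s : ℚ) + P.eval (s : ℚ) := by
      intro t s
      rw [Polynomial.eval_sub, Polynomial.taylor_eval]
      push_cast
      ring_nf
    simp only [hev]
    have hite : ∀ (t : ZMod b) (e' : Fin n → ZMod b) (u v : ℚ),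
        (if t + ∑ i, e' i = r then u + v else 0) =
        (if ∑ i, e' i = r - t then u else 0) + (if t = r - ∑ i, e' i then v else 0) := by
      intro t e' u v
      have h1 : t + ∑ i, e' i = r ↔ ∑ i, e' i = r - t := by rw [eq_sub_iff_add_eq, add_comm]
      have h2 : t + ∑ i, e' i = r ↔ t = r - ∑ i, e' i := by rw [eq_sub_iff_add_eq]
      by_cases h : t + ∑ i, e' i = r
      · rw [if_pos h, if_pos (h1.1 h), if_pos (h2.1 h)]
      · rw [if_neg h, if_neg (fun h' => h (h1.2 h')), if_neg (fun h' => h (h2.2 h')), add_zero]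
    simp only [hite, Finset.sum_add_distrib, mul_add]
    congr 1
    · rw [Finset.mul_sum]
      exact Finset.sum_congr rfl fun t _ => ih _ (hdeg t) _
    · rw [Finset.sum_comm]
      simp [ZMod.card]

lemma card_T_eq_P (N a q : ℕ) (hq : a < q) :
    Nat.card {x // GoodT N a q x} = Nat.card {z // GoodP N a q z} := by
  symm
  refine Nat.card_eq_of_bijective
    (fun z => (⟨phi N a z.1, phi_good N a q z.1 z.2⟩ : {x // GoodT N a q x})) ⟨?_, ?_⟩
  · intro z w h
    exact Subtype.ext (phi_inj N a q _ _ z.2 w.2 (congrArg Subtype.val h))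
  · rintro ⟨x, hx⟩
    obtain ⟨z, hz, h⟩ := phi_surj N a q hq x hx
    exact ⟨⟨z, hz⟩, Subtype.ext h⟩

lemma sum_val_le (N a : ℕ) (e : Fin (N+1) → ZMod (a+1)) : ∑ i, (e i).val ≤ (N+1) * a := by
  calc ∑ i, (e i).val ≤ ∑ _i : Fin (N+1), a :=
        Finset.sum_le_sum fun i _ => Nat.lt_succ_iff.1 (ZMod.val_lt (e i))
    _ = _ := by simp

lemma exists_m (N a q : ℕ) (hq : (N+1) * a < q) (e : Fin (N+1) → ZMod (a+1))
    (he : ∑ i, e i = (q : ZMod (a+1))) :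
    (a+1) * ((q - ∑ i, (e i).val) / (a+1)) + ∑ i, (e i).val = q := by
  have h1 := sum_val_le N a e
  have h2 : ((∑ i, (e i).val : ℕ) : ZMod (a+1)) = (q : ZMod (a+1)) := by
    rw [← he]; push_cast; simp
  rw [ZMod.natCast_eq_natCast_iff] at h2
  have h3 := (Nat.modEq_iff_dvd' (by omega)).1 h2
  rw [Nat.mul_div_cancel' h3]
  omega

lemma card_P (N a q : ℕ) (hq : (N+1) * a < q) :
    Nat.card {z // GoodP N a q z} =
      ∑ e : Fin (N+1) → ZMod (a+1), if ∑ i, e i = (q : ZMod (a+1)) then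
        ((q - ∑ i, (e i).val) / (a+1)) ^ N else 0 := by
  have hb : Nat.card {z // GoodP N a q z} =
      Nat.card (Σ e : {e : Fin (N+1) → ZMod (a+1) // ∑ i, e i = (q : ZMod (a+1))},
        (Fin N → Fin ((q - ∑ i, (e.1 i).val) / (a+1)))) := by
    symm
    refine Nat.card_eq_of_bijective (fun s => (⟨(fun i => (s.1.1 i).val,
      Fin.cons 0 (fun i => (s.2 i).val)), ?_⟩ : {z // GoodP N a q z})) ⟨?_, ?_⟩
    · obtain ⟨⟨e, he⟩, g⟩ := s
      have hm := exists_m N a q hq e he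
      have hs := sum_val_le N a e
      refine ⟨fun i => Nat.lt_succ_iff.1 (ZMod.val_lt (e i)), rfl, _, hm, ?_⟩
      intro i
      refine Fin.cases ?_ (fun i => ?_) i
      · show 0 < _
        by_contra hc
        rw [Nat.eq_zero_of_not_pos hc] at hm
        omega
      · exact (g i).2
    · rintro ⟨⟨e, he⟩, g⟩ ⟨⟨e', he'⟩, g'⟩ h
      have h' := congrArg Subtype.val h
      simp only [Prod.mk.injEq] at h'
      have h1 : e = e' := by
        funext i
        exact ZMod.val_injective _ (congrFun h'.1 i)
      subst h1
      have h2 : g = g' := by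
        funext i
        exact Fin.ext (congrFun h'.2 i.succ)
      rw [h2]
    · rintro ⟨⟨e, f⟩, he, h0, m, hm, hf⟩
      simp only at he h0 hm hf
      have hv : ∀ i, ((e i : ℕ) : ZMod (a+1)).val = e i := fun i =>
        ZMod.val_natCast_of_lt (Nat.lt_succ_of_le (he i))
      have hmm : (q - ∑ i, ((e i : ℕ) : ZMod (a+1)).val) / (a+1) = m := by
        simp only [hv]
        rw [← hm, Nat.add_sub_cancel, Nat.mul_div_cancel_left _ (Nat.succ_pos a)]
      refine ⟨⟨⟨fun i => (e i : ZMod (a+1)), ?_⟩, fun i => ⟨f i.succ, ?_⟩⟩, ?_⟩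
      · rw [← hm]
        have : ((a : ZMod (a+1)) + 1) = 0 := by exact_mod_cast ZMod.natCast_self (a+1)
        push_cast
        rw [this]; simp
      · show f i.succ < _
        rw [hmm]; exact hf _
      · apply Subtype.ext
        refine Prod.ext (funext hv) ?_
        funext i
        refine Fin.cases ?_ (fun i => ?_) i
        · exact h0.symm
        · rfl
  rw [hb, Nat.card_sigma, ← Finset.sum_filter,
    ← Finset.sum_subtype_eq_sum_filter]
  simp only [Nat.card_eq_fintype_card, Fintype.card_fun, Fintype.card_fin]
  refine Finset.sum_congr ?_ fun _ _ => rfl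
  ext; simp

lemma avoid_iff (q a s t : ℕ) (hs : s < q) (ht : t < q) (ha : a < q) :
    Avoids ((s : ZMod q) - (t : ZMod q)) 1 (a : ℤ) ↔
      ∀ k, 1 ≤ k → k ≤ a → s ≠ t + k ∧ s + q ≠ t + k := by
  constructor
  · intro h k hk hka
    have := h k (by omega) (by omega)
    refine ⟨fun h' => this ?_, fun h' => this ?_⟩
    · rw [h']; push_cast; ring
    · have h2 : (s : ZMod q) = t + k := by
        have := congrArg (Nat.cast : ℕ → ZMod q) h'
        simpa using this
      rw [h2]; push_cast; ring
  · intro h k hk hka he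
    lift k to ℕ using by omega
    have h1 := h k (by omega) (by omega)
    have h2 : ((s : ℕ) : ZMod q) = ((t + k : ℕ) : ZMod q) := by
      rw [sub_eq_iff_eq_add] at he
      rw [he]; push_cast; ring
    rw [ZMod.natCast_eq_natCast_iff'] at h2
    rw [Nat.mod_eq_of_lt hs] at h2
    rcases lt_or_ge (t + k) q with h3 | h3
    · rw [Nat.mod_eq_of_lt h3] at h2; exact h1.1 h2
    · rw [Nat.mod_eq_sub_mod h3, Nat.mod_eq_of_lt (by omega)] at h2
      omega

lemma card_N (N a q : ℕ) (hq : a < q) :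
    N_A (N+1) q 1 (a : ℤ) = q * Nat.card {x // GoodT N a q x} := by
  have : NeZero q := ⟨by omega⟩
  have h : Nat.card {x : Fin (N+1) → ZMod q // ∀ i j, i < j → Avoids (x i - x j) 1 (a : ℤ)}
      = Nat.card (ZMod q × {x // GoodT N a q x}) := by
    symm
    refine Nat.card_eq_of_bijective (fun s => ⟨fun i => s.1 + (s.2.1 i : ZMod q), ?_⟩) ⟨?_, ?_⟩
    · obtain ⟨t, y, h0, hl, hav⟩ := s
      intro i j hij
      simp only [add_sub_add_left_eq_sub]
      exact (avoid_iff q a _ _ (hl i) (hl j) hq).2 (hav i j hij)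
    · rintro ⟨t, y, hy⟩ ⟨t', y', hy'⟩ h
      have h' := congrArg Subtype.val h
      simp only at h'
      have h1 : t = t' := by simpa [hy.1, hy'.1] using congrFun h' 0
      subst h1
      have h2 : y = y' := by
        funext i
        have := add_left_cancel (congrFun h' i)
        rw [ZMod.natCast_eq_natCast_iff', Nat.mod_eq_of_lt (hy.2.1 i),
          Nat.mod_eq_of_lt (hy'.2.1 i)] at this
        exact this
      subst h2
      rfl
    · rintro ⟨x, hx⟩
      refine ⟨(x 0, ⟨fun i => (x i - x 0).val, by simp, fun i => ZMod.val_lt _, ?_⟩), ?_⟩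
      · intro i j hij
        rw [← avoid_iff q a _ _ (ZMod.val_lt _) (ZMod.val_lt _) hq]
        simpa using hx i j hij
      · apply Subtype.ext
        funext i
        simp
  rw [Nat.card_prod, Nat.card_zmod] at h
  rw [← h, N_A, ← Nat.card_coe_set_eq]
  rfl

lemma sum_c (n a : ℕ) (F : ℕ → ℚ) :
    ∑ k ∈ Finset.range (n * a + 1),
      (((((∑ j ∈ Finset.range (a + 1), (X : Polynomial ℕ) ^ j)) ^ n).coeff k : ℕ) : ℚ) * F k =
    ∑ e : Fin n → ZMod (a+1), F (∑ i, (e i).val) := by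
  have h1 : (∑ j ∈ Finset.range (a + 1), (X : Polynomial ℕ) ^ j) ^ n =
      ∑ e : Fin n → ZMod (a+1), X ^ (∑ i, (e i).val) := by
    have h2 : (∑ j ∈ Finset.range (a + 1), (X : Polynomial ℕ) ^ j) =
        ∑ t : ZMod (a+1), X ^ t.val := Finset.sum_range _
    rw [h2, Fintype.sum_pow]
    simp only [Finset.prod_pow_eq_pow_sum]
  rw [h1]
  simp only [Polynomial.finsetSum_coeff, Polynomial.coeff_X_pow]
  push_cast
  simp only [Finset.sum_mul]
  rw [Finset.sum_comm]
  refine Finset.sum_congr rfl fun e _ => ?_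
  have hle : ∑ i, (e i).val ≤ n * a := by
    calc ∑ i, (e i).val ≤ ∑ _i : Fin n, a :=
          Finset.sum_le_sum fun i _ => Nat.lt_succ_iff.1 (ZMod.val_lt (e i))
      _ = _ := by simp
  rw [Finset.sum_eq_single (∑ i, (e i).val)]
  · simp
  · intro b _ hb; simp [hb]
  · intro h; simp at h; omega

/-- Corollary 3.4. For `q > (a+1)n`,
`(a+1)^n ⬝ N_A(n,q,1,a) = q ⬝ ∑_{k=0}^{na} c_k (q-k)^(n-1)` as rational numbers,
where the `c_k` are the coefficients of `(1 + y + ... + y^a)^n`. -/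
theorem statement4 (n a : ℕ) (hn : 2 ≤ n) (ha : 1 ≤ a)
    (c : ℕ → ℕ)
    (hc : ∀ k, c k = (((∑ j ∈ Finset.range (a + 1), (X : Polynomial ℕ) ^ j)) ^ n).coeff k)
    (q : ℕ) (hq : (a + 1) * n < q) :
    ((a : ℚ) + 1) ^ n * (N_A n q 1 (a : ℤ) : ℚ) =
      (q : ℚ) * ∑ k ∈ Finset.range (n * a + 1),
        (c k : ℚ) * ((q : ℚ) - (k : ℚ)) ^ (n - 1) := by
  obtain ⟨N, rfl⟩ : ∃ N, n = N + 1 := ⟨n - 1, by omega⟩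
  have hq1 : (N+1) * a < q := by nlinarith
  have hq2 : a < q := by nlinarith
  simp only [hc, Nat.add_sub_cancel]
  rw [sum_c (N+1) a (fun k => ((q : ℚ) - (k : ℚ)) ^ N), card_N N a q hq2, card_T_eq_P N a q hq2,
    card_P N a q hq1]
  have hdeg : (((C (q : ℚ) - X) ^ N : ℚ[X])).degree < ((N + 1 : ℕ) : WithBot ℕ) := by
    refine lt_of_le_of_lt (Polynomial.degree_pow_le_of_le (b := N) (a := 1) ?_) ?_
    · refine (Polynomial.degree_sub_le _ _).trans (max_le ?_ Polynomial.degree_X_le)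
      exact Polynomial.degree_C_le.trans (by norm_num)
    · rw [mul_one]; exact_mod_cast Nat.lt_succ_self N
  have key := resid (a+1) (N+1) ((C (q : ℚ) - X) ^ N) hdeg (q : ZMod (a+1))
  simp only [Polynomial.eval_pow, Polynomial.eval_sub, Polynomial.eval_C, Polynomial.eval_X] at key
  rw [← key]
  rw [Nat.cast_mul, Nat.cast_sum, mul_left_comm]
  congr 1
  rw [Finset.mul_sum, Finset.mul_sum]
  refine Finset.sum_congr rfl fun e _ => ?_
  split_ifs with he
  · have hm := exists_m N a q hq1 e he
    have hm' := congrArg (Nat.cast : ℕ → ℚ) hm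
    rw [Nat.cast_add, Nat.cast_mul] at hm'
    rw [← eq_sub_iff_add_eq] at hm'
    rw [← hm', mul_pow]
    push_cast
    ring
  · simp
end
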